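/- arXiv:0907.1792 — 4 statements merged into one kernel-verified Lean document; each statement's English description precedes it below -/
import Mathlib

section
/- Let E₀ be a positive operator measure on the Borel sets of ℝ with values in the bounded operators on L²(ℝ) satisfying: (a) the time-covariance condition e^{itH₀} E₀(B) e^{-itH₀} = E₀(B+t) for all Borel B and all t ∈ ℝ, where e^{-itH₀} := F* e^{-itM²} F and e^{-itM²} is multiplication by k ↦ e^{-itk²}; (b) E₀(ℝ) = F* χ_{[0,∞)}(M) F (the projection onto positive momenta), so that in particular E₀(B) ≤ F* χ_{[0,∞)}(M) F for all B. Let T : ℝ → ℂ be measurable and suppose there exists T̃ : {ω ∈ ℂ : Im ω ≥ 0} → ℂ continuous, analytic on {Im ω > 0}, with |T̃(ω)| ≤ 1 everywhere and T̃(k) = T(k) for all k ≥ 0. Then for every t ∈ ℝ, T(P)* E₀((−∞,t]) T(P) ≤ E₀((−∞,t]), where T(P) := F* T(M) F and T(M) is multiplication by T. -/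
open MeasureTheory Complex Filter Set
open scoped ENNReal NNReal

noncomputable section

/-- `L²(ℝ)` with respect to Lebesgue measure. -/
abbrev H2 : Type := Lp ℂ 2 (volume : Measure ℝ)

/-- `𝓕` is the Fourier–Plancherel operator: a unitary on `L²(ℝ)` which is given on
`L¹ ∩ L²` by the usual integral formula `(𝓕φ)(y) = (2π)^{-1/2} ∫ e^{-iyx} φ(x) dx`, and whose
inverse `𝓕* = 𝓕⁻¹` is given on `L¹ ∩ L²` by `(𝓕*φ)(y) = (2π)^{-1/2} ∫ e^{iyx} φ(x) dx`. -/
def IsFourier (𝓕 : H2 ≃ₗᵢ[ℂ] H2) : Prop :=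
  (∀ φ : H2, Integrable (⇑φ) volume →
      (⇑(𝓕 φ) : ℝ → ℂ) =ᵐ[volume]
        fun y : ℝ => (Real.sqrt (2 * Real.pi) : ℂ)⁻¹ *
          ∫ x : ℝ, Complex.exp (-(Complex.I * y * x)) * φ x) ∧
  (∀ φ : H2, Integrable (⇑φ) volume →
      (⇑(𝓕.symm φ) : ℝ → ℂ) =ᵐ[volume]
        fun y : ℝ => (Real.sqrt (2 * Real.pi) : ℂ)⁻¹ *
          ∫ x : ℝ, Complex.exp (Complex.I * y * x) * φ x)

/-- The multiplication operator `g(M)` on `L²`: `φ ↦ g·φ` (pointwise product), defined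
whenever the product is again in `L²`. -/
def mulLp {μ : Measure ℝ} (g : ℝ → ℂ) (φ : Lp ℂ 2 μ) : Lp ℂ 2 μ := by
  classical exact if h : MemLp (fun x => g x * φ x) 2 μ then h.toLp _ else 0

/-- A positive operator measure (POM) on the Borel sets of `ℝ` with values in the bounded
operators on a Hilbert space `K`: `0 ≤ E(B) ≤ I`, `E(∅) = 0`, and `E` is σ-additive in the
strong operator topology. -/
structure POM (K : Type) [NormedAddCommGroup K] [InnerProductSpace ℂ K] [CompleteSpace K] where
  toFun : Set ℝ → K →L[ℂ] K
  pos : ∀ B : Set ℝ, (toFun B).IsPositive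
  le_one : ∀ B : Set ℝ, (ContinuousLinearMap.id ℂ K - toFun B).IsPositive
  empty : toFun ∅ = 0
  sigma_additive : ∀ f : ℕ → Set ℝ, (∀ n, MeasurableSet (f n)) →
    Pairwise (Function.onFun Disjoint f) →
    ∀ φ : K, HasSum (fun n => toFun (f n) φ) (toFun (⋃ n, f n) φ)

/-- The free Schrödinger evolution `e^{-itH₀} = F* e^{-itM²} F` on `L²(ℝ)`. -/
def freeEvol (𝓕 : H2 ≃ₗᵢ[ℂ] H2) (t : ℝ) (φ : H2) : H2 :=
  𝓕.symm (mulLp (fun k : ℝ => Complex.exp (-(Complex.I * t * k ^ 2))) (𝓕 φ))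

theorem s7_parseval {E : Type*} [NormedAddCommGroup E] [InnerProductSpace ℂ E] (N : ℕ) [NeZero N]
    (Φ : ZMod N → E) : ∑ k, ‖ZMod.dft Φ k‖ ^ 2 = N * ∑ j, ‖Φ j‖ ^ 2 := by
  have key : ∑ k, (inner ℂ (ZMod.dft Φ k) (ZMod.dft Φ k) : ℂ)
      = (N : ℂ) * ∑ j, (inner ℂ (Φ j) (Φ j) : ℂ) := by
    have h1 : ∀ k, (inner ℂ (ZMod.dft Φ k) (ZMod.dft Φ k) : ℂ)
        = ∑ j, ZMod.stdAddChar (-(j * k)) * inner ℂ (ZMod.dft Φ k) (Φ j) := by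
      intro k
      conv_lhs => rw [ZMod.dft_apply Φ k]
      rw [inner_sum, ← ZMod.dft_apply Φ k]
      simp [inner_smul_right]
    have h2 : ∀ j, ∑ k, ZMod.stdAddChar (-(j * k)) * (inner ℂ (ZMod.dft Φ k) (Φ j) : ℂ)
        = N * inner ℂ (Φ j) (Φ j) := by
      intro j
      have h3 : (N : ℂ) • Φ j = ∑ k, ZMod.stdAddChar (j * k) • ZMod.dft Φ k := by
        have := congrFun (ZMod.dft_dft Φ) (-j)
        rw [ZMod.dft_apply] at this
        simp only [neg_neg] at this
        rw [← this]
        refine Finset.sum_congr rfl fun k _ => ?_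
        congr 2
        ring
      have h4 : (inner ℂ ((N : ℂ) • Φ j) (Φ j) : ℂ) = N * inner ℂ (Φ j) (Φ j) := by
        rw [inner_smul_left]; simp
      rw [← h4, h3, sum_inner]
      refine Finset.sum_congr rfl fun k _ => ?_
      rw [inner_smul_left, AddChar.map_neg_eq_conj]
    simp_rw [h1]
    rw [Finset.sum_comm]
    simp_rw [h2]
    rw [Finset.mul_sum]
  have : ((∑ k, ‖ZMod.dft Φ k‖ ^ 2 : ℝ) : ℂ) = ((N * ∑ j, ‖Φ j‖ ^ 2 : ℝ) : ℂ) := by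
    push_cast
    simpa [inner_self_eq_norm_sq_to_K] using key
  exact_mod_cast this

theorem s7_toeplitz {E : Type*} [NormedAddCommGroup E] [InnerProductSpace ℂ E] (N : ℕ) [NeZero N]
    (a : ZMod N → E) (c : ℕ → ℂ) (d : ℕ) (M : ℝ)
    (hM : ∀ z : ℂ, ‖z‖ = 1 → ‖∑ k ∈ Finset.range d, c k * z ^ k‖ ≤ M) :
    ∑ n, ‖∑ k ∈ Finset.range d, c k • a (n + k)‖ ^ 2 ≤ M ^ 2 * ∑ n, ‖a n‖ ^ 2 := by
  set b : ZMod N → E := fun n => ∑ k ∈ Finset.range d, c k • a (n + k) with hb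
  have h1 : ∀ j, ZMod.dft b j
      = (∑ k ∈ Finset.range d, c k * (ZMod.stdAddChar j : ℂ) ^ k) • ZMod.dft a j := by
    intro j
    rw [ZMod.dft_apply]
    simp only [hb, Finset.smul_sum]
    rw [Finset.sum_comm, Finset.sum_smul]
    refine Finset.sum_congr rfl fun k _ => ?_
    rw [ZMod.dft_apply, Finset.smul_sum]
    refine Fintype.sum_equiv (Equiv.addRight (k : ZMod N)) _ _ fun n => ?_
    simp only [Equiv.coe_addRight, smul_smul]
    congr 1
    have : (ZMod.stdAddChar j : ℂ) ^ k = ZMod.stdAddChar ((k : ZMod N) * j) := by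
      rw [← AddChar.map_nsmul_eq_pow, nsmul_eq_mul]
    rw [this, mul_assoc, ← AddChar.map_add_eq_mul, mul_comm]
    congr 2
    ring
  have h2 : ∑ j, ‖ZMod.dft b j‖ ^ 2 ≤ M ^ 2 * ∑ j, ‖ZMod.dft a j‖ ^ 2 := by
    rw [Finset.mul_sum]
    refine Finset.sum_le_sum fun j _ => ?_
    rw [h1, norm_smul, mul_pow]
    gcongr
    exact hM _ (AddChar.norm_apply _ _)
  rw [s7_parseval, s7_parseval] at h2
  have hN : (0 : ℝ) < N := Nat.cast_pos.2 (Nat.pos_of_ne_zero (NeZero.ne N))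
  have : (N : ℝ) * ∑ j, ‖b j‖ ^ 2 ≤ N * (M ^ 2 * ∑ n, ‖a n‖ ^ 2) := by linarith
  exact le_of_mul_le_mul_left this hN

theorem s7_sqrt {H : Type*} [NormedAddCommGroup H] [InnerProductSpace ℂ H] [CompleteSpace H]
    (D : H →L[ℂ] H) (hDp : D.IsPositive) :
    ∃ R : H →L[ℂ] H, ∀ y, ‖R y‖ ^ 2 = (inner ℂ (D y) y : ℂ).re := by
  have hD0 : 0 ≤ D := (ContinuousLinearMap.nonneg_iff_isPositive D).2 hDp
  refine ⟨CFC.sqrt D, fun y => ?_⟩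
  have hs : (CFC.sqrt D) * (CFC.sqrt D) = D := CFC.sqrt_mul_sqrt_self D hD0
  have hsa : IsSelfAdjoint (CFC.sqrt D) := (CFC.sqrt_nonneg D).isSelfAdjoint
  have h1 : (inner ℂ (CFC.sqrt D y) (CFC.sqrt D y) : ℂ) = inner ℂ (D y) y := by
    conv_rhs => rw [← hs]
    rw [mul_apply_eq_comp]
    conv_rhs => rw [← hsa.adjoint_eq]
    rw [ContinuousLinearMap.adjoint_inner_left]
    rw [hsa.adjoint_eq]
  rw [← h1]
  exact (inner_self_eq_norm_sq (𝕜 := ℂ) (CFC.sqrt D y)).symm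

theorem s7_vn {H : Type*} [NormedAddCommGroup H] [InnerProductSpace ℂ H] [CompleteSpace H]
    (S C : H →L[ℂ] H) (hC : ∀ x, ‖S (C x)‖ ≤ ‖S x‖) (ρ : ℝ) (hρ0 : 0 ≤ ρ) (hρ1 : ρ < 1)
    (c : ℕ → ℂ) (d : ℕ) (M : ℝ) (hM0 : 0 ≤ M)
    (hM : ∀ z : ℂ, ‖z‖ = 1 → ‖∑ k ∈ Finset.range d, c k * z ^ k‖ ≤ M) (x : H) :
    ‖S (∑ k ∈ Finset.range d, c k • (((ρ : ℂ) • C) ^ k) x)‖ ≤ M * ‖S x‖ := by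
  set X : H →L[ℂ] H := (ρ : ℂ) • C with hX
  have hXn : ∀ y, ‖S (X y)‖ ≤ ρ * ‖S y‖ := by
    intro y
    simp only [hX, smul_apply, map_smul, norm_smul, Complex.norm_real,
      Real.norm_eq_abs, abs_of_nonneg hρ0]
    gcongr
    exact hC y
  have hXn1 : ∀ y, ‖S (X y)‖ ≤ ‖S y‖ := fun y => (hXn y).trans (by
    nlinarith [norm_nonneg (S y)])
  obtain ⟨R, hR⟩ : ∃ R : H →L[ℂ] H, ∀ y, ‖R y‖ ^ 2 = ‖S y‖ ^ 2 - ‖S (X y)‖ ^ 2 := by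
    set D : H →L[ℂ] H := (ContinuousLinearMap.adjoint S) * S
      - (ContinuousLinearMap.adjoint (S * X)) * (S * X) with hD
    have hDi : ∀ y, (inner ℂ (D y) y : ℂ) = ((‖S y‖ ^ 2 - ‖S (X y)‖ ^ 2 : ℝ) : ℂ) := by
      intro y
      simp only [hD, sub_apply, mul_apply_eq_comp, inner_sub_left,
        ContinuousLinearMap.adjoint_inner_left, inner_self_eq_norm_sq_to_K]
      push_cast
      rfl
    have hDp : D.IsPositive := by
      rw [ContinuousLinearMap.isPositive_iff_complex]
      intro y
      rw [hDi]
      refine ⟨congrArg _ (Complex.ofReal_re _), ?_⟩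
      have := hXn1 y
      simp only [RCLike.re_eq_complex_re, Complex.ofReal_re]
      nlinarith [norm_nonneg (S (X y))]
    obtain ⟨R, hR⟩ := s7_sqrt D hDp
    exact ⟨R, fun y => by rw [hR, hDi, Complex.ofReal_re]⟩
  have tele : ∀ (n : ℕ) (y : H), ∑ i ∈ Finset.range n, ‖R ((X ^ i) y)‖ ^ 2
      = ‖S y‖ ^ 2 - ‖S ((X ^ n) y)‖ ^ 2 := by
    intro n y
    induction n with
    | zero => simp
    | succ n ih =>
      rw [Finset.sum_range_succ, ih, hR, pow_succ' X n, mul_apply_eq_comp]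
      ring
  have hpow : ∀ (n : ℕ) (y : H), ‖S ((X ^ n) y)‖ ≤ ρ ^ n * ‖S y‖ := by
    intro n y
    induction n with
    | zero => simp
    | succ n ih =>
      rw [pow_succ' X n, mul_apply_eq_comp, pow_succ']
      refine (hXn _).trans ?_
      rw [mul_assoc]
      gcongr
  set px : H := ∑ k ∈ Finset.range d, c k • (X ^ k) x with hpx
  have main : ∀ N : ℕ, ‖S px‖ ^ 2 - (ρ ^ N * ‖S px‖) ^ 2 ≤ M ^ 2 * ‖S x‖ ^ 2 := by
    intro N
    let L := N + d + 1
    let a : ZMod (N + d + 1) → H := fun m => R ((X ^ (m.val)) x)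
    have ht := s7_toeplitz (N + d + 1) a c d M hM
    have hsum : ∀ f : ℕ → ℝ, ∑ m : ZMod (N + d + 1), f m.val
        = ∑ i ∈ Finset.range (N + d + 1), f i := by
      intro f
      exact Fin.sum_univ_eq_sum_range f (N + d + 1)
    have ha : ∑ n, ‖a n‖ ^ 2 ≤ ‖S x‖ ^ 2 := by
      have := hsum (fun i => ‖R ((X ^ i) x)‖ ^ 2)
      rw [tele] at this
      simp only [a]
      rw [this]
      nlinarith [norm_nonneg (S ((X ^ (N + d + 1)) x))]
    have hb : ∑ i ∈ Finset.range N, ‖R ((X ^ i) px)‖ ^ 2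
        ≤ ∑ n, ‖∑ k ∈ Finset.range d, c k • a (n + k)‖ ^ 2 := by
      let f : ℕ → ℝ := fun i => ‖∑ k ∈ Finset.range d, c k • a ((i : ZMod (N + d + 1)) + k)‖ ^ 2
      have e1 : ∑ n, ‖∑ k ∈ Finset.range d, c k • a (n + k)‖ ^ 2
          = ∑ i ∈ Finset.range (N + d + 1), f i := by
        rw [← hsum f]
        refine Finset.sum_congr rfl fun n _ => ?_
        simp only [f, ZMod.natCast_val, ZMod.cast_id', id]
      rw [e1]
      calc ∑ i ∈ Finset.range N, ‖R ((X ^ i) px)‖ ^ 2 = ∑ i ∈ Finset.range N, f i := by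
            refine Finset.sum_congr rfl fun i hi => ?_
            simp only [f, hpx, map_sum, map_smul]
            congr 2
            refine Finset.sum_congr rfl fun k hk => ?_
            simp only [a]
            have hv : ((i : ZMod (N + d + 1)) + k).val = i + k := by
              rw [← Nat.cast_add, ZMod.val_natCast, Nat.mod_eq_of_lt]
              have := Finset.mem_range.1 hi
              have := Finset.mem_range.1 hk
              omega
            rw [hv, pow_add, mul_apply_eq_comp]
        _ ≤ _ := Finset.sum_le_sum_of_subset_of_nonneg
            (Finset.range_mono (by omega)) (fun i _ _ => by positivity)
    rw [tele] at hb
    have h5 := hpow N px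
    have h6 : ‖S ((X ^ N) px)‖ ^ 2 ≤ (ρ ^ N * ‖S px‖) ^ 2 := by gcongr
    have h7 : M ^ 2 * ∑ n, ‖a n‖ ^ 2 ≤ M ^ 2 * ‖S x‖ ^ 2 := by gcongr
    linarith
  have hlim : Filter.Tendsto (fun N : ℕ => ‖S px‖ ^ 2 - (ρ ^ N * ‖S px‖) ^ 2) Filter.atTop
      (nhds (‖S px‖ ^ 2 - (0 * ‖S px‖) ^ 2)) := by
    refine tendsto_const_nhds.sub (Filter.Tendsto.pow ?_ 2)
    exact (tendsto_pow_atTop_nhds_zero_of_lt_one hρ0 hρ1).mul_const _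
  have h8 := le_of_tendsto' hlim main
  have h9 : ‖S px‖ ^ 2 ≤ (M * ‖S x‖) ^ 2 := by rw [mul_pow]; simpa using h8
  exact le_of_sq_le_sq h9 (by positivity)

/-- bounded measurable multiplier -/
structure S7B (g : ℝ → ℂ) (K : ℝ) : Prop where
  meas : Measurable g
  bd : ∀ x, ‖g x‖ ≤ K

theorem S7B.memLp {g : ℝ → ℂ} {K : ℝ} (h : S7B g K) (f : H2) :
    MemLp (fun x => g x * f x) 2 volume := by
  refine MemLp.of_le_mul (Lp.memLp f) (c := K)
    (h.meas.aestronglyMeasurable.mul (Lp.aestronglyMeasurable f)) (Filter.Eventually.of_forall ?_)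
  intro x
  rw [norm_mul]
  have := h.bd x
  gcongr

theorem S7B.coe {g : ℝ → ℂ} {K : ℝ} (h : S7B g K) (f : H2) :
    (mulLp g f : ℝ → ℂ) =ᵐ[volume] fun x => g x * f x := by
  unfold mulLp
  rw [dif_pos (h.memLp f)]
  exact MemLp.coeFn_toLp _

theorem S7B.eq_of_ae {g : ℝ → ℂ} {K : ℝ} (h : S7B g K) (f w : H2)
    (hw : (w : ℝ → ℂ) =ᵐ[volume] fun x => g x * f x) : mulLp g f = w :=
  Lp.ext ((h.coe f).trans hw.symm)

theorem S7B.K0 {g : ℝ → ℂ} {K : ℝ} (h : S7B g K) : 0 ≤ K := (norm_nonneg _).trans (h.bd 0)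

/-- bounded multiplication operator -/
def S7B.op {g : ℝ → ℂ} {K : ℝ} (h : S7B g K) : H2 →L[ℂ] H2 :=
  LinearMap.mkContinuous
    { toFun := mulLp g
      map_add' := fun f w => by
        refine h.eq_of_ae _ _ ?_
        filter_upwards [Lp.coeFn_add (mulLp g f) (mulLp g w), h.coe f, h.coe w,
          Lp.coeFn_add f w] with x h1 h2 h3 h4
        rw [h1, h4, Pi.add_apply, Pi.add_apply, h2, h3, mul_add]
      map_smul' := fun c f => by
        refine h.eq_of_ae _ _ ?_
        filter_upwards [Lp.coeFn_smul c (mulLp g f), h.coe f, Lp.coeFn_smul c f] with x h1 h2 h3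
        simp only [RingHom.id_apply]
        rw [h1, h3, Pi.smul_apply, Pi.smul_apply, h2, smul_eq_mul, smul_eq_mul]
        ring }
    K (fun f => by
      refine Lp.norm_le_mul_norm_of_ae_le_mul ?_
      filter_upwards [h.coe f] with x h1
      simp only [LinearMap.coe_mk, AddHom.coe_mk]
      rw [h1, norm_mul]
      have := h.bd x
      gcongr)

theorem S7B.op_apply {g : ℝ → ℂ} {K : ℝ} (h : S7B g K) (f : H2) : h.op f = mulLp g f := rfl

theorem S7B.mul {g g' : ℝ → ℂ} {K K' : ℝ} (h : S7B g K) (h' : S7B g' K') :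
    S7B (fun x => g x * g' x) (K * K') :=
  ⟨h.meas.mul h'.meas, fun x => by
    rw [norm_mul]; exact mul_le_mul (h.bd x) (h'.bd x) (norm_nonneg _) h.K0⟩

theorem S7B.mulLp_mulLp {g g' : ℝ → ℂ} {K K' : ℝ} (h : S7B g K) (h' : S7B g' K') (f : H2) :
    mulLp g (mulLp g' f) = mulLp (fun x => g x * g' x) f := by
  symm
  refine (h.mul h').eq_of_ae _ _ ?_
  filter_upwards [h.coe (mulLp g' f), h'.coe f] with x h1 h2
  rw [h1, h2, mul_assoc]

theorem s7_norm_sq (f : H2) : ‖f‖ ^ 2 = ∫ x, ‖f x‖ ^ 2 := by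
  have h := L2.inner_def (𝕜 := ℂ) f f
  have h1 : (inner ℂ f f : ℂ) = ((‖f‖ ^ 2 : ℝ) : ℂ) := by
    rw [inner_self_eq_norm_sq_to_K]; norm_cast
  have h2 : (∫ x, (inner ℂ (f x) (f x) : ℂ)) = ((∫ x, ‖f x‖ ^ 2 : ℝ) : ℂ) := by
    rw [← integral_complex_ofReal]
    congr 1
    ext x
    rw [inner_self_eq_norm_sq_to_K]; norm_cast
  rw [h1, h2] at h
  exact_mod_cast h

theorem s7_tendsto {g : ℝ → ℂ} {K : ℝ} (h : S7B g K) (G : ℕ → ℝ → ℂ) (hG : ∀ n, S7B (G n) K)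
    (hlim : ∀ᵐ x, Tendsto (fun n => G n x) atTop (nhds (g x))) (f : H2) :
    Tendsto (fun n => mulLp (G n) f) atTop (nhds (mulLp g f)) := by
  rw [tendsto_iff_norm_sub_tendsto_zero]
  have h1 : ∀ n, ‖mulLp (G n) f - mulLp g f‖ ^ 2 = ∫ x, ‖(G n x - g x) * f x‖ ^ 2 := by
    intro n
    rw [s7_norm_sq]
    refine integral_congr_ae ?_
    filter_upwards [Lp.coeFn_sub (mulLp (G n) f) (mulLp g f), (hG n).coe f, h.coe f] with x a b c
    rw [a, Pi.sub_apply, b, c, sub_mul]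
  have hfi : Integrable (fun x => (2 * K) ^ 2 * ‖f x‖ ^ 2) volume :=
    ((memLp_two_iff_integrable_sq_norm (Lp.aestronglyMeasurable f)).1 (Lp.memLp f)).const_mul _
  have h2 : Tendsto (fun n => ∫ x, ‖(G n x - g x) * f x‖ ^ 2) atTop
      (nhds (∫ x : ℝ, (0 : ℝ))) := by
    refine tendsto_integral_of_dominated_convergence (fun x => (2 * K) ^ 2 * ‖f x‖ ^ 2) ?_ hfi ?_ ?_
    · intro n
      exact (((((hG n).meas.sub h.meas).aestronglyMeasurable).mul
        (Lp.aestronglyMeasurable f)).norm.pow 2)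
    · intro n
      refine Filter.Eventually.of_forall fun x => ?_
      have a := (hG n).bd x
      have b := h.bd x
      have c : ‖G n x - g x‖ ≤ 2 * K := (norm_sub_le _ _).trans (by linarith)
      rw [norm_mul, mul_pow, Real.norm_eq_abs, abs_of_nonneg (by positivity)]
      gcongr
    · filter_upwards [hlim] with x hx
      have : Tendsto (fun n => ‖(G n x - g x) * f x‖ ^ 2) atTop
          (nhds (‖(g x - g x) * f x‖ ^ 2)) :=
        (((hx.sub_const _).mul_const _).norm).pow 2
      simpa using this
  have h3 : Tendsto (fun n => ‖mulLp (G n) f - mulLp g f‖ ^ 2) atTop (nhds 0) := by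
    simp_rw [h1]
    simpa using h2
  have h4 := h3.sqrt
  simpa [Real.sqrt_sq] using h4

theorem s7_closed (S : H2 →L[ℂ] H2) {g : ℝ → ℂ} {K : ℝ} (h : S7B g K) (G : ℕ → ℝ → ℂ)
    (hG : ∀ n, S7B (G n) K) (hlim : ∀ᵐ x, Tendsto (fun n => G n x) atTop (nhds (g x)))
    (M : ℕ → ℝ) (hM : Tendsto M atTop (nhds 1)) (f : H2)
    (hS : ∀ n, ‖S (mulLp (G n) f)‖ ≤ M n * ‖S f‖) : ‖S (mulLp g f)‖ ≤ ‖S f‖ := by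
  have h1 := ((S.continuous.tendsto _).comp (s7_tendsto h G hG hlim f)).norm
  have h2 := hM.mul_const ‖S f‖
  rw [one_mul] at h2
  exact le_of_tendsto_of_tendsto' h1 h2 hS

theorem s7_blaschke {E : Type*} [NormedAddCommGroup E] [InnerProductSpace ℂ E] (a b : E)
    (h : ‖b‖ ≤ ‖a‖) (r : ℝ) (hr : 1 ≤ r) : ‖(r : ℂ) • b - a‖ ≤ ‖(r : ℂ) • a - b‖ := by
  refine le_of_sq_le_sq ?_ (norm_nonneg _)
  rw [@norm_sub_sq ℂ, @norm_sub_sq ℂ, inner_smul_left, inner_smul_left, norm_smul, norm_smul]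
  have h1 : RCLike.re (inner ℂ a b : ℂ) = RCLike.re (inner ℂ b a : ℂ) := inner_re_symm _ _
  simp only [Complex.conj_ofReal, Complex.norm_real, Real.norm_eq_abs,
    abs_of_nonneg (zero_le_one.trans hr)]
  simp only [RCLike.re_eq_complex_re, Complex.re_ofReal_mul] at h1 ⊢
  rw [h1]
  have h2 : ‖b‖ ^ 2 ≤ ‖a‖ ^ 2 := by gcongr
  nlinarith [mul_nonneg (show (0:ℝ) ≤ r ^ 2 - 1 by nlinarith) (sub_nonneg.2 h2)]

/-- the evolution multiplier -/
def s7v (s : ℝ) (k : ℝ) : ℂ := Complex.exp (Complex.I * s * k ^ 2)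

theorem s7v_norm (s k : ℝ) : ‖s7v s k‖ = 1 := by
  unfold s7v
  have : Complex.I * s * k ^ 2 = ((s * k ^ 2 : ℝ) : ℂ) * Complex.I := by push_cast; ring
  rw [this, Complex.norm_exp_ofReal_mul_I]

theorem s7v_B (s : ℝ) : S7B (s7v s) 1 :=
  ⟨by unfold s7v; fun_prop, fun x => (s7v_norm s x).le⟩

/-- the Cayley multiplier -/
def s7c (k : ℝ) : ℂ := (1 + Complex.I * k ^ 2) / (1 - Complex.I * k ^ 2)

theorem s7_den_ne (k : ℝ) : (1 - Complex.I * k ^ 2 : ℂ) ≠ 0 := by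
  intro h
  have := congrArg Complex.re h
  simp [← Complex.ofReal_pow] at this

theorem s7c_norm (k : ℝ) : ‖s7c k‖ = 1 := by
  unfold s7c
  have h : (1 + Complex.I * k ^ 2 : ℂ) = (starRingEnd ℂ) (1 - Complex.I * k ^ 2) := by
    simp
  rw [norm_div, h, Complex.norm_conj, div_self]
  exact norm_ne_zero_iff.2 (s7_den_ne k)

theorem s7c_B : S7B s7c 1 :=
  ⟨by unfold s7c; fun_prop, fun x => (s7c_norm x).le⟩

theorem s7_den_bd (s : ℝ) (hs : 0 < s) (k : ℝ) : s ≤ ‖(((1 + s : ℝ) : ℂ) - s7v s k)‖ := by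
  have := norm_sub_norm_le (((1 + s : ℝ) : ℂ)) (s7v s k)
  rw [s7v_norm, Complex.norm_real, Real.norm_eq_abs, abs_of_pos (by linarith)] at this
  linarith

/-- approximate Cayley multiplier -/
def s7m (s k : ℝ) : ℂ := (((1 + s : ℝ) : ℂ) * s7v s k - 1) / (((1 + s : ℝ) : ℂ) - s7v s k)

theorem s7m_B (s : ℝ) (hs : 0 < s) : S7B (s7m s) 1 := by
  refine ⟨?_, fun x => ?_⟩
  · have := (s7v_B s).meas
    unfold s7m; fun_prop
  · unfold s7m
    rw [norm_div]
    refine div_le_one_of_le₀ ?_ (norm_nonneg _)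
    have := s7_blaschke (1 : ℂ) (s7v s x) (by rw [s7v_norm]; simp) (1 + s) (by linarith)
    simpa using this

theorem s7m_mult (S : H2 →L[ℂ] H2)
    (hV : ∀ s : ℝ, 0 ≤ s → ∀ f, ‖S (mulLp (s7v s) f)‖ ≤ ‖S f‖) (s : ℝ) (hs : 0 < s) (f : H2) :
    ‖S (mulLp (s7m s) f)‖ ≤ ‖S f‖ := by
  let w : ℝ → ℂ := fun k => 1 / (((1 + s : ℝ) : ℂ) - s7v s k)
  have hne : ∀ k, (((1 + s : ℝ) : ℂ) - s7v s k) ≠ 0 := fun k =>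
    norm_pos_iff.1 (hs.trans_le (s7_den_bd s hs k))
  have hw : S7B w (1 / s) := by
    refine ⟨?_, fun x => ?_⟩
    · have := (s7v_B s).meas
      fun_prop
    · simp only [w]
      rw [norm_div, norm_one]
      exact one_div_le_one_div_of_le hs (s7_den_bd s hs x)
  set ψ := mulLp w f with hψ
  have e1 : mulLp (s7m s) f = ((1 + s : ℝ) : ℂ) • mulLp (s7v s) ψ - ψ := by
    refine (s7m_B s hs).eq_of_ae _ _ ?_
    filter_upwards [Lp.coeFn_sub (((1 + s : ℝ) : ℂ) • mulLp (s7v s) ψ) ψ,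
      Lp.coeFn_smul ((1 + s : ℝ) : ℂ) (mulLp (s7v s) ψ), (s7v_B s).coe ψ, hw.coe f]
      with x h1 h2 h3 h4
    rw [h1, Pi.sub_apply, h2, Pi.smul_apply, h3, h4, smul_eq_mul]
    simp only [w, s7m]
    ring
  have e2 : f = ((1 + s : ℝ) : ℂ) • ψ - mulLp (s7v s) ψ := by
    refine Lp.ext ?_
    filter_upwards [Lp.coeFn_sub (((1 + s : ℝ) : ℂ) • ψ) (mulLp (s7v s) ψ),
      Lp.coeFn_smul ((1 + s : ℝ) : ℂ) ψ, (s7v_B s).coe ψ, hw.coe f]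
      with x h1 h2 h3 h4
    rw [h1, Pi.sub_apply, h2, Pi.smul_apply, h3, h4, smul_eq_mul]
    simp only [w]
    have := hne x
    field_simp
  rw [e1]
  conv_rhs => rw [e2]
  rw [map_sub, map_sub, map_smul, map_smul]
  exact s7_blaschke _ _ (hV s hs.le ψ) _ (by linarith)

theorem s7m_lim (k : ℝ) :
    Tendsto (fun n : ℕ => s7m (1 / ((n : ℝ) + 1)) k) atTop (nhds (s7c k)) := by
  have hs : Tendsto (fun n : ℕ => (1 / ((n : ℝ) + 1))) atTop (nhdsWithin 0 {0}ᶜ) := by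
    refine tendsto_nhdsWithin_iff.2 ⟨tendsto_one_div_add_atTop_nhds_zero_nat, ?_⟩
    refine Filter.Eventually.of_forall fun n => ?_
    simp only [Set.mem_compl_iff, Set.mem_singleton_iff]
    positivity
  have hd : HasDerivAt (fun s : ℝ => s7v s k) (Complex.I * k ^ 2) 0 := by
    have h1 : HasDerivAt (fun s : ℂ => Complex.exp (Complex.I * s * k ^ 2))
        (Complex.I * k ^ 2) ((0 : ℝ) : ℂ) := by
      have := (((hasDerivAt_id ((0 : ℝ) : ℂ)).const_mul Complex.I).mul_const ((k : ℂ) ^ 2)).cexp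
      simpa using this
    exact h1.comp_ofReal
  have hslope := (hasDerivAt_iff_tendsto_slope.1 hd).comp hs
  have hv : Tendsto (fun n : ℕ => s7v (1 / ((n : ℝ) + 1)) k) atTop (nhds 1) := by
    have := hd.continuousAt.tendsto.comp tendsto_one_div_add_atTop_nhds_zero_nat
    simpa [s7v, Function.comp_def] using this
  have h0 : s7v 0 k = 1 := by simp [s7v]
  have hq := (hslope.add hv).div (tendsto_const_nhds (x := (1 : ℂ)).sub hslope) (s7_den_ne k)
  have e : (1 + Complex.I * k ^ 2 : ℂ) / (1 - Complex.I * k ^ 2) = s7c k := rfl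
  rw [add_comm, e] at hq
  refine hq.congr fun n => ?_
  have hn : (0 : ℝ) < 1 / ((n : ℝ) + 1) := by positivity
  simp only [Pi.div_apply, Function.comp_apply, slope, vsub_eq_sub, sub_zero, h0]
  generalize (1 / ((n : ℝ) + 1)) = s at hn
  have hsc : (s : ℂ) ≠ 0 := by exact_mod_cast hn.ne'
  unfold s7m
  rw [Complex.real_smul]
  push_cast
  have h5 : (s : ℂ)⁻¹ * (s7v s k - 1) + s7v s k = (s : ℂ)⁻¹ * ((1 + s) * s7v s k - 1) := by
    field_simp; ring
  have h6 : 1 - (s : ℂ)⁻¹ * (s7v s k - 1) = (s : ℂ)⁻¹ * ((1 + s) - s7v s k) := by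
    field_simp; ring
  rw [h5, h6, mul_div_mul_left _ _ (inv_ne_zero hsc)]

theorem s7c_mult (S : H2 →L[ℂ] H2)
    (hV : ∀ s : ℝ, 0 ≤ s → ∀ f, ‖S (mulLp (s7v s) f)‖ ≤ ‖S f‖) (f : H2) :
    ‖S (mulLp s7c f)‖ ≤ ‖S f‖ := by
  refine s7_closed S s7c_B (fun n => s7m (1 / ((n : ℝ) + 1)))
    (fun n => s7m_B _ (by positivity)) (Filter.Eventually.of_forall s7m_lim) (fun _ => 1)
    tendsto_const_nhds f (fun n => ?_)
  rw [one_mul]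
  exact s7m_mult S hV _ (by positivity) f

theorem s7_poly_mult (S : H2 →L[ℂ] H2)
    (hV : ∀ s : ℝ, 0 ≤ s → ∀ f, ‖S (mulLp (s7v s) f)‖ ≤ ‖S f‖) (ρ : ℝ) (hρ0 : 0 ≤ ρ)
    (hρ1 : ρ < 1) (c : ℕ → ℂ) (d : ℕ) (M : ℝ) (hM0 : 0 ≤ M)
    (hM : ∀ z : ℂ, ‖z‖ = 1 → ‖∑ k ∈ Finset.range d, c k * z ^ k‖ ≤ M) (K : ℝ)
    (hB : S7B (fun x => ∑ k ∈ Finset.range d, c k * (ρ * s7c x) ^ k) K) (f : H2) :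
    ‖S (mulLp (fun x => ∑ k ∈ Finset.range d, c k * (ρ * s7c x) ^ k) f)‖ ≤ M * ‖S f‖ := by
  have h := s7_vn S s7c_B.op (fun x => s7c_mult S hV x) ρ hρ0 hρ1 c d M hM0 hM f
  have hpow : ∀ k : ℕ, ((((ρ : ℂ) • s7c_B.op) ^ k) f : ℝ → ℂ)
      =ᵐ[volume] fun x => (ρ * s7c x) ^ k * f x := by
    intro k
    induction k with
    | zero => simp
    | succ k ih =>
      rw [pow_succ', mul_apply_eq_comp, smul_apply, S7B.op_apply]
      filter_upwards [ih, Lp.coeFn_smul (ρ : ℂ) (mulLp s7c ((((ρ : ℂ) • s7c_B.op) ^ k) f)),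
        s7c_B.coe ((((ρ : ℂ) • s7c_B.op) ^ k) f)] with x h1 h2 h3
      rw [h2, Pi.smul_apply, h3, h1, smul_eq_mul]
      ring
  have e : mulLp (fun x => ∑ k ∈ Finset.range d, c k * (ρ * s7c x) ^ k) f
      = ∑ k ∈ Finset.range d, c k • (((ρ : ℂ) • s7c_B.op) ^ k) f := by
    refine hB.eq_of_ae _ _ ?_
    have hsum : ∀ d : ℕ, ((∑ k ∈ Finset.range d, c k • (((ρ : ℂ) • s7c_B.op) ^ k) f : H2) : ℝ → ℂ)
        =ᵐ[volume] fun x => (∑ k ∈ Finset.range d, c k * (ρ * s7c x) ^ k) * f x := by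
      intro d
      induction d with
      | zero =>
        simp only [Finset.range_zero, Finset.sum_empty, zero_mul]
        exact Lp.coeFn_zero _ _ _
      | succ d ih =>
        rw [Finset.sum_range_succ]
        filter_upwards [Lp.coeFn_add (∑ k ∈ Finset.range d, c k • (((ρ : ℂ) • s7c_B.op) ^ k) f)
          (c d • (((ρ : ℂ) • s7c_B.op) ^ d) f), ih, hpow d,
          Lp.coeFn_smul (c d) ((((ρ : ℂ) • s7c_B.op) ^ d) f)] with x h1 h2 h3 h4
        rw [h1, Pi.add_apply, h2, h4, Pi.smul_apply, h3, Finset.sum_range_succ, smul_eq_mul]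
        ring
    exact hsum d
  rw [e]
  exact h

/-- disc to half plane -/
def s7L (z : ℂ) : ℂ := Complex.I * ((1 - z) / (1 + z))

/-- square root on the upper half plane -/
def s7q (w : ℂ) : ℂ := Complex.exp (Complex.log w / 2)

theorem s7_one_add_ne (z : ℂ) (hz : ‖z‖ < 1) : (1 + z) ≠ 0 := by
  intro h
  have : z = -1 := by linear_combination h
  rw [this] at hz
  simp at hz

theorem s7L_im (z : ℂ) (hz : ‖z‖ < 1) : 0 < (s7L z).im := by
  have hne := s7_one_add_ne z hz
  have h1 : 0 < Complex.normSq (1 + z) := Complex.normSq_pos.2 hne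
  have h2 : Complex.normSq z < 1 := by
    rw [Complex.normSq_eq_norm_sq]; nlinarith [norm_nonneg z]
  have h3 : (s7L z).im = (1 - Complex.normSq z) / Complex.normSq (1 + z) := by
    unfold s7L
    rw [Complex.I_mul_im, Complex.div_re, Complex.normSq_apply z]
    simp
    ring
  rw [h3]
  exact div_pos (by linarith) h1

theorem s7q_im (w : ℂ) (hw : 0 < w.im) : 0 < (s7q w).im := by
  have hw0 : w ≠ 0 := by rintro rfl; simp at hw
  have h1 : s7q w * s7q w = w := by
    unfold s7q
    rw [← Complex.exp_add, add_halves, Complex.exp_log hw0]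
  have h2 : 0 ≤ (s7q w).re := by
    unfold s7q
    rw [Complex.exp_re]
    refine mul_nonneg (Real.exp_pos _).le (Real.cos_nonneg_of_mem_Icc ?_)
    have h3 : (Complex.log w / 2).im = w.arg / 2 := by
      rw [show (2 : ℂ) = ((2 : ℝ) : ℂ) by norm_num, Complex.div_ofReal_im, Complex.log_im]
    rw [h3]
    have := Complex.neg_pi_lt_arg w
    have := Complex.arg_le_pi w
    constructor <;> linarith
  have h4 := congrArg Complex.im h1
  rw [Complex.mul_im] at h4
  by_contra hcon
  push Not at hcon
  nlinarith [mul_nonneg h2 (neg_nonneg.2 hcon)]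

/-- the function on the disc -/
def s7h (Tt : ℂ → ℂ) (z : ℂ) : ℂ := Tt (s7q (s7L z))

theorem s7h_diff (Tt : ℂ → ℂ) (hTa : DifferentiableOn ℂ Tt {ω : ℂ | 0 < ω.im}) (z : ℂ)
    (hz : ‖z‖ < 1) : DifferentiableAt ℂ (s7h Tt) z := by
  have him := s7L_im z hz
  have h1 : DifferentiableAt ℂ s7L z := by
    unfold s7L
    have := s7_one_add_ne z hz
    fun_prop (disch := assumption)
  have h2 : DifferentiableAt ℂ s7q (s7L z) := by
    unfold s7q
    have : s7L z ∈ Complex.slitPlane := Or.inr him.ne'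
    exact ((differentiableAt_id.clog this).div_const 2).cexp
  have h3 : DifferentiableAt ℂ Tt (s7q (s7L z)) :=
    hTa.differentiableAt ((isOpen_lt continuous_const Complex.continuous_im).mem_nhds
      (s7q_im _ him))
  exact h3.comp z (h2.comp z h1)

theorem s7_approx (h : ℂ → ℂ) (hd : ∀ z : ℂ, ‖z‖ < 1 → DifferentiableAt ℂ h z) (r : ℝ)
    (hr0 : 0 ≤ r) (hr1 : r < 1) (ε : ℝ) (hε : 0 < ε) :
    ∃ (c : ℕ → ℂ) (d : ℕ), ∀ z : ℂ, ‖z‖ ≤ 1 →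
      ‖(∑ k ∈ Finset.range d, c k * z ^ k) - h (r * z)‖ ≤ ε := by
  have hRp : 0 < 2 / (1 + r) := by positivity
  let R : ℝ≥0 := ⟨2 / (1 + r), hRp.le⟩
  have hR1 : (1 : ℝ) < R := by
    change 1 < 2 / (1 + r)
    rw [lt_div_iff₀ (by linarith)]; linarith
  have hdiff : DifferentiableOn ℂ (fun z => h (r * z)) (Metric.closedBall 0 R) := by
    intro z hz
    have hz' : ‖z‖ ≤ 2 / (1 + r) := by
      have hz1 : ‖z‖ ≤ R := by simpa using hz
      exact hz1
    have hlt : ‖(r : ℂ) * z‖ < 1 := by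
      rw [norm_mul, Complex.norm_real, Real.norm_eq_abs, abs_of_nonneg hr0]
      calc r * ‖z‖ ≤ r * (2 / (1 + r)) := by gcongr
        _ < 1 := by
          rw [← mul_div_assoc, div_lt_one (by linarith)]; linarith
    have := hd _ hlt
    exact (DifferentiableAt.comp z this (differentiableAt_id.const_mul (r : ℂ))).differentiableWithinAt
  have hp := hdiff.hasFPowerSeriesOnBall (R := R) (by exact_mod_cast hRp)
  obtain ⟨r', h1r', hr'R⟩ := exists_between (show (1 : ℝ≥0) < R from by exact_mod_cast hR1)
  have hu := hp.tendstoUniformlyOn (r' := r') (by exact_mod_cast hr'R)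
  rw [Metric.tendstoUniformlyOn_iff] at hu
  obtain ⟨d, hd'⟩ := (hu ε hε).exists
  refine ⟨fun k => (cauchyPowerSeries (fun z => h (r * z)) 0 R).coeff k, d, fun z hz => ?_⟩
  have := hd' z (by
    simp only [Metric.mem_ball, dist_zero_right]
    exact hz.trans_lt (by exact_mod_cast h1r'))
  rw [dist_eq_norm, norm_sub_rev, zero_add] at this
  refine le_trans (le_of_eq ?_) this.le
  congr 2
  unfold FormalMultilinearSeries.partialSum
  refine Finset.sum_congr rfl fun k _ => ?_
  rw [FormalMultilinearSeries.apply_eq_pow_smul_coeff, smul_eq_mul, mul_comm]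

theorem s7_limit (Tt : ℂ → ℂ) (hTc : ContinuousOn Tt {ω : ℂ | 0 ≤ ω.im}) (k : ℝ) (hk : k ≠ 0)
    (ρ : ℕ → ℝ) (hρ0 : ∀ n, 0 ≤ ρ n) (hρ1 : ∀ n, ρ n < 1) (hρ : Tendsto ρ atTop (nhds 1)) :
    Tendsto (fun n => s7h Tt (ρ n * s7c k)) atTop (nhds (Tt ((|k| : ℝ) : ℂ))) := by
  have hden := s7_den_ne k
  have h1 : Tendsto (fun n => (ρ n : ℂ) * s7c k) atTop (nhds (s7c k)) := by
    have := ((Complex.continuous_ofReal.tendsto 1).comp hρ).mul_const (s7c k)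
    simpa [Function.comp_def] using this
  have hone : 1 + s7c k ≠ 0 := by
    have : 1 + s7c k = 2 / (1 - Complex.I * k ^ 2) := by
      unfold s7c; field_simp; ring
    rw [this]
    exact div_ne_zero two_ne_zero hden
  have hL : s7L (s7c k) = ((k ^ 2 : ℝ) : ℂ) := by
    unfold s7L
    have h2 : (1 - s7c k) / (1 + s7c k) = - (Complex.I * k ^ 2) := by
      rw [div_eq_iff hone]
      unfold s7c
      field_simp
      ring
    rw [h2]
    push_cast
    linear_combination (-(k : ℂ) ^ 2) * Complex.I_sq
  have hLc : ContinuousAt s7L (s7c k) := by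
    unfold s7L
    fun_prop (disch := assumption)
  have hk2 : 0 < k ^ 2 := by positivity
  have hqc : ContinuousAt s7q (s7L (s7c k)) := by
    rw [hL]
    unfold s7q
    have : ((k ^ 2 : ℝ) : ℂ) ∈ Complex.slitPlane := Complex.ofReal_mem_slitPlane.2 hk2
    exact ((continuousAt_id.clog this).div_const 2).cexp
  have hqv : s7q (s7L (s7c k)) = ((|k| : ℝ) : ℂ) := by
    rw [hL]
    unfold s7q
    rw [← Complex.ofReal_log hk2.le]
    have : Real.log (k ^ 2) / 2 = Real.log |k| := by
      rw [← sq_abs, Real.log_pow]; push_cast; ring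
    rw [show ((Real.log (k ^ 2) : ℝ) : ℂ) / 2 = ((Real.log (k ^ 2) / 2 : ℝ) : ℂ) by push_cast; rfl,
      this, ← Complex.ofReal_exp, Real.exp_log (abs_pos.2 hk)]
  have h3 : Tendsto (fun n => s7q (s7L (ρ n * s7c k))) atTop (nhds ((|k| : ℝ) : ℂ)) := by
    rw [← hqv]
    exact (hqc.tendsto.comp (hLc.tendsto.comp h1))
  have h4 : Tendsto (fun n => s7q (s7L (ρ n * s7c k))) atTop
      (nhdsWithin ((|k| : ℝ) : ℂ) {ω : ℂ | 0 ≤ ω.im}) := by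
    refine tendsto_nhdsWithin_iff.2 ⟨h3, Filter.Eventually.of_forall fun n => ?_⟩
    refine (s7q_im _ (s7L_im _ ?_)).le
    rw [norm_mul, s7c_norm, Complex.norm_real, Real.norm_eq_abs, abs_of_nonneg (hρ0 n), mul_one]
    exact hρ1 n
  have h5 : ContinuousWithinAt Tt {ω : ℂ | 0 ≤ ω.im} ((|k| : ℝ) : ℂ) := hTc _ (by simp)
  exact h5.tendsto.comp h4

theorem s7_abs_B (Tt : ℂ → ℂ) (hTc : ContinuousOn Tt {ω : ℂ | 0 ≤ ω.im})
    (hTb : ∀ ω : ℂ, 0 ≤ ω.im → ‖Tt ω‖ ≤ 1) : S7B (fun k => Tt ((|k| : ℝ) : ℂ)) 1 := by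
  refine ⟨?_, fun x => hTb _ (by simp)⟩
  have : Continuous (fun k : ℝ => Tt ((|k| : ℝ) : ℂ)) :=
    hTc.comp_continuous (by fun_prop) (fun x => by simp)
  exact this.measurable

theorem s7_core (S : H2 →L[ℂ] H2)
    (hV : ∀ s : ℝ, 0 ≤ s → ∀ f, ‖S (mulLp (s7v s) f)‖ ≤ ‖S f‖) (Tt : ℂ → ℂ)
    (hTc : ContinuousOn Tt {ω : ℂ | 0 ≤ ω.im})
    (hTa : DifferentiableOn ℂ Tt {ω : ℂ | 0 < ω.im})
    (hTb : ∀ ω : ℂ, 0 ≤ ω.im → ‖Tt ω‖ ≤ 1) (f : H2) :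
    ‖S (mulLp (fun k => Tt ((|k| : ℝ) : ℂ)) f)‖ ≤ ‖S f‖ := by
  let ε : ℕ → ℝ := fun n => 1 / ((n : ℝ) + 1)
  have hε : ∀ n, 0 < ε n := fun n => by positivity
  have hε1 : ∀ n, ε n ≤ 1 := fun n => by
    simp only [ε]; rw [div_le_one (by positivity)]; linarith [Nat.cast_nonneg (α := ℝ) n]
  have hεl : Tendsto ε atTop (nhds 0) := tendsto_one_div_add_atTop_nhds_zero_nat
  let r : ℕ → ℝ := fun n => 1 - ε n
  have hr0 : ∀ n, 0 ≤ r n := fun n => sub_nonneg.2 (hε1 n)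
  have hr1 : ∀ n, r n < 1 := fun n => by simp only [r]; linarith [hε n]
  have hrl : Tendsto r atTop (nhds 1) := by
    have := tendsto_const_nhds (x := (1 : ℝ)) (f := (atTop : Filter ℕ)) |>.sub hεl
    simpa using this
  have hhb : ∀ z : ℂ, ‖z‖ < 1 → ‖s7h Tt z‖ ≤ 1 := fun z hz =>
    hTb _ (s7q_im _ (s7L_im z hz)).le
  have happ := fun n => s7_approx (s7h Tt) (s7h_diff Tt hTa) (r n) (hr0 n) (hr1 n) (ε n) (hε n)
  choose c d hcd using happ
  have hrz : ∀ n (z : ℂ), ‖z‖ ≤ 1 → ‖(r n : ℂ) * z‖ < 1 := by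
    intro n z hz
    rw [norm_mul, Complex.norm_real, Real.norm_eq_abs, abs_of_nonneg (hr0 n)]
    nlinarith [hr0 n, hr1 n]
  have hpb : ∀ n (z : ℂ), ‖z‖ ≤ 1 → ‖∑ k ∈ Finset.range (d n), c n k * z ^ k‖ ≤ 1 + ε n := by
    intro n z hz
    have h1 := hcd n z hz
    have h2 := hhb _ (hrz n z hz)
    have h3 := norm_le_norm_add_norm_sub' (∑ k ∈ Finset.range (d n), c n k * z ^ k)
      (s7h Tt (r n * z))
    linarith
  have hB : ∀ n, S7B (fun x => ∑ k ∈ Finset.range (d n), c n k * (r n * s7c x) ^ k) 2 := by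
    intro n
    refine ⟨?_, fun x => ?_⟩
    · have := s7c_B.meas
      fun_prop
    · refine (hpb n _ (hrz n _ (s7c_norm x).le).le).trans ?_
      linarith [hε1 n]
  have hg := s7_abs_B Tt hTc hTb
  refine s7_closed S (K := 2) ⟨hg.meas, fun x => (hg.bd x).trans one_le_two⟩ _ hB ?_
    (fun n => 1 + ε n) (by simpa using tendsto_const_nhds (x := (1 : ℝ)).add hεl) f (fun n =>
      s7_poly_mult S hV (r n) (hr0 n) (hr1 n) (c n) (d n) (1 + ε n) (by linarith [hε n])
        (fun z hz => hpb n z hz.le) 2 (hB n) f)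
  have hae : ∀ᵐ x : ℝ, x ≠ 0 := by
    simp [ae_iff]
  filter_upwards [hae] with x hx
  have hlim := s7_limit Tt hTc x hx (fun n => r n * r n) (fun n => mul_nonneg (hr0 n) (hr0 n))
    (fun n => by nlinarith [hr0 n, hr1 n]) (by simpa using hrl.mul hrl)
  have hdiff : Tendsto (fun n => (∑ k ∈ Finset.range (d n), c n k * (r n * s7c x) ^ k)
      - s7h Tt (((r n * r n : ℝ) : ℂ) * s7c x)) atTop (nhds 0) := by
    refine squeeze_zero_norm (fun n => ?_) hεl
    have := hcd n (r n * s7c x) (hrz n _ (s7c_norm x).le).le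
    rw [← mul_assoc] at this
    push_cast
    exact this
  simpa using hdiff.add hlim

theorem s7_E_add (E₀ : POM H2) (A B : Set ℝ) (hA : MeasurableSet A) (hB : MeasurableSet B)
    (hd : Disjoint A B) (φ : H2) :
    E₀.toFun (A ∪ B) φ = E₀.toFun A φ + E₀.toFun B φ := by
  let f : ℕ → Set ℝ := fun n => if n = 0 then A else if n = 1 then B else ∅
  have hf0 : f 0 = A := rfl
  have hf1 : f 1 = B := rfl
  have hf2 : ∀ n, n ≠ 0 → n ≠ 1 → f n = ∅ := fun n h0 h1 => by simp [f, h0, h1]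
  have hm : ∀ n, MeasurableSet (f n) := by
    intro n
    by_cases h0 : n = 0
    · subst h0; exact hA
    by_cases h1 : n = 1
    · subst h1; exact hB
    rw [hf2 n h0 h1]; exact MeasurableSet.empty
  have hp : Pairwise (Function.onFun Disjoint f) := by
    intro i j hij
    simp only [Function.onFun]
    by_cases hi0 : i = 0
    · subst hi0
      by_cases hj1 : j = 1
      · subst hj1; exact hd
      rw [hf2 j hij.symm hj1]; exact disjoint_bot_right
    by_cases hi1 : i = 1
    · subst hi1
      by_cases hj0 : j = 0
      · subst hj0; exact hd.symm
      rw [hf2 j hj0 hij.symm]; exact disjoint_bot_right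
    rw [hf2 i hi0 hi1]; exact disjoint_bot_left
  have hU : (⋃ n, f n) = A ∪ B := by
    ext x
    simp only [Set.mem_iUnion, Set.mem_union]
    constructor
    · rintro ⟨n, hn⟩
      by_cases h0 : n = 0
      · subst h0; exact Or.inl hn
      by_cases h1 : n = 1
      · subst h1; exact Or.inr hn
      rw [hf2 n h0 h1] at hn; exact hn.elim
    · rintro (h | h)
      · exact ⟨0, h⟩
      · exact ⟨1, h⟩
  have h1 := E₀.sigma_additive f hm hp φ
  rw [hU] at h1
  have h2 : HasSum (fun n => E₀.toFun (f n) φ) (∑ n ∈ Finset.range 2, E₀.toFun (f n) φ) := by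
    refine hasSum_sum_of_ne_finset_zero fun n hn => ?_
    simp only [Finset.mem_range, not_lt] at hn
    rw [hf2 n (by omega) (by omega), E₀.empty]; rfl
  rw [h1.unique h2, Finset.sum_range_succ, Finset.sum_range_succ, Finset.sum_range_zero, zero_add,
    hf0, hf1]

theorem s7_E_mono (E₀ : POM H2) (A B : Set ℝ) (hA : MeasurableSet A) (hB : MeasurableSet B)
    (h : A ⊆ B) (φ : H2) :
    (inner ℂ φ (E₀.toFun A φ) : ℂ).re ≤ (inner ℂ φ (E₀.toFun B φ) : ℂ).re := by
  have h1 := s7_E_add E₀ A (B \ A) hA (hB.diff hA) Set.disjoint_sdiff_right φ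
  rw [Set.union_sdiff_cancel h] at h1
  rw [h1, inner_add_right, Complex.add_re]
  have h2 : 0 ≤ (inner ℂ φ (E₀.toFun (B \ A) φ) : ℂ).re := (E₀.pos (B \ A)).re_inner_nonneg_right φ
  linarith

theorem s7_freeEvol (𝓕 : H2 ≃ₗᵢ[ℂ] H2) (t : ℝ) (φ : H2) :
    freeEvol 𝓕 t φ = 𝓕.symm (mulLp (s7v (-t)) (𝓕 φ)) := by
  unfold freeEvol
  congr 2
  ext k
  unfold s7v
  push_cast
  ring_nf

theorem s7v_adj (s : ℝ) (f g : H2) :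
    (inner ℂ f (mulLp (s7v (-s)) g) : ℂ) = inner ℂ (mulLp (s7v s) f) g := by
  rw [L2.inner_def, L2.inner_def]
  refine integral_congr_ae ?_
  filter_upwards [(s7v_B (-s)).coe g, (s7v_B s).coe f] with x h1 h2
  rw [h1, h2]
  have : s7v (-s) x = (starRingEnd ℂ) (s7v s x) := by
    unfold s7v
    rw [← Complex.exp_conj]
    simp
  rw [this]
  simp only [RCLike.inner_apply, map_mul]
  ring

theorem s7_freeEvol_adj (𝓕 : H2 ≃ₗᵢ[ℂ] H2) (t : ℝ) (φ ψ : H2) :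
    (inner ℂ φ (freeEvol 𝓕 t ψ) : ℂ) = inner ℂ (freeEvol 𝓕 (-t) φ) ψ := by
  rw [s7_freeEvol, s7_freeEvol, neg_neg, ← 𝓕.inner_map_map, 𝓕.apply_symm_apply, s7v_adj,
    ← 𝓕.symm.inner_map_map, 𝓕.symm_apply_apply]

/-- Let `E₀` be a POM on `L²(ℝ)` which is time-covariant for the free
evolution, `e^{itH₀} E₀(B) e^{-itH₀} = E₀(B+t)`, and satisfies `E₀(ℝ) = F* χ_{[0,∞)}(M) F`.
If `T : ℝ → ℂ` is measurable and has a continuous extension `T̃` to the closed upper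
half-plane, analytic on the open half-plane, with `|T̃| ≤ 1` and `T̃(k) = T(k)` for `k ≥ 0`,
then `T(P)* E₀((-∞,t]) T(P) ≤ E₀((-∞,t])` for every `t ∈ ℝ`. -/
theorem statement7 (𝓕 : H2 ≃ₗᵢ[ℂ] H2) (h𝓕 : IsFourier 𝓕) (E₀ : POM H2)
    (hcov : ∀ (t : ℝ) (B : Set ℝ), MeasurableSet B → ∀ φ : H2,
      freeEvol 𝓕 (-t) (E₀.toFun B (freeEvol 𝓕 t φ)) = E₀.toFun ((· + t) '' B) φ)
    (htotal : ∀ φ : H2,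
      E₀.toFun Set.univ φ =
        𝓕.symm (mulLp (Set.indicator (Set.Ici (0 : ℝ)) fun _ => (1 : ℂ)) (𝓕 φ)))
    (T : ℝ → ℂ) (hT : Measurable T) (Tt : ℂ → ℂ)
    (hTc : ContinuousOn Tt {ω : ℂ | 0 ≤ ω.im})
    (hTa : DifferentiableOn ℂ Tt {ω : ℂ | 0 < ω.im})
    (hTb : ∀ ω : ℂ, 0 ≤ ω.im → ‖Tt ω‖ ≤ 1)
    (hagree : ∀ k : ℝ, 0 ≤ k → Tt (k : ℂ) = T k)
    (t : ℝ) (φ : H2) :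
    (inner ℂ (𝓕.symm (mulLp T (𝓕 φ)))
        (E₀.toFun (Set.Iic t) (𝓕.symm (mulLp T (𝓕 φ)))) : ℂ).re ≤
      (inner ℂ φ (E₀.toFun (Set.Iic t) φ) : ℂ).re := by
  by_cases hmem : MemLp (fun x => T x * (𝓕 φ) x) 2 volume
  swap
  · have h0 : mulLp T (𝓕 φ) = 0 := by
      unfold mulLp
      rw [dif_neg hmem]
    rw [h0, map_zero, map_zero, inner_zero_left, Complex.zero_re]
    exact (E₀.pos (Set.Iic t)).re_inner_nonneg_right φ
  obtain ⟨R, hR'⟩ := s7_sqrt (E₀.toFun (Set.Iic t)) (E₀.pos _)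
  have hR : ∀ y, ‖R y‖ ^ 2 = (inner ℂ y (E₀.toFun (Set.Iic t) y) : ℂ).re := fun y => by
    rw [hR']; exact inner_re_symm (𝕜 := ℂ) _ _
  let S : H2 →L[ℂ] H2 := R.comp (𝓕.symm.toContinuousLinearEquiv : H2 →L[ℂ] H2)
  have hS : ∀ f, S f = R (𝓕.symm f) := fun f => rfl
  have hV : ∀ s : ℝ, 0 ≤ s → ∀ f, ‖S (mulLp (s7v s) f)‖ ≤ ‖S f‖ := by
    intro s hs f
    refine le_of_sq_le_sq ?_ (norm_nonneg _)
    have e : 𝓕.symm (mulLp (s7v s) f) = freeEvol 𝓕 (-s) (𝓕.symm f) := by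
      rw [s7_freeEvol, neg_neg, 𝓕.apply_symm_apply]
    rw [hS, hS, hR, hR, e, ← s7_freeEvol_adj]
    have h1 := hcov (-s) (Set.Iic t) measurableSet_Iic (𝓕.symm f)
    rw [neg_neg] at h1
    rw [h1]
    refine s7_E_mono E₀ _ _ ?_ measurableSet_Iic ?_ _
    · rw [Set.image_add_const_Iic]; exact measurableSet_Iic
    · rw [Set.image_add_const_Iic]; exact Set.Iic_subset_Iic.2 (by linarith)
  have hsupp : ∀ w : H2, (∀ᵐ x, 0 ≤ x → w x = 0) → S w = 0 := by
    intro w hw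
    have h1 : mulLp (Set.indicator (Set.Ici (0 : ℝ)) fun _ => (1 : ℂ)) w = 0 := by
      have hB : S7B (Set.indicator (Set.Ici (0 : ℝ)) fun _ => (1 : ℂ)) 1 := by
        refine ⟨measurable_const.indicator measurableSet_Ici, fun x => ?_⟩
        by_cases hx : x ∈ Set.Ici (0 : ℝ)
        · rw [Set.indicator_of_mem hx]; simp
        · rw [Set.indicator_of_notMem hx]; simp
      refine hB.eq_of_ae _ _ ?_
      filter_upwards [hw, Lp.coeFn_zero ℂ 2 (volume : Measure ℝ)] with x h1 h2
      rw [h2]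
      by_cases hx : x ∈ Set.Ici (0 : ℝ)
      · rw [h1 hx]; simp
      · rw [Set.indicator_of_notMem hx]; simp
    have h2 := s7_E_mono E₀ (Set.Iic t) Set.univ measurableSet_Iic MeasurableSet.univ
      (Set.subset_univ _) (𝓕.symm w)
    rw [htotal, 𝓕.apply_symm_apply, h1, map_zero, inner_zero_right, ← hR, Complex.zero_re] at h2
    have h3 : ‖S w‖ ^ 2 = 0 := le_antisymm (by rw [hS]; exact h2) (by positivity)
    exact norm_eq_zero.1 (pow_eq_zero_iff two_ne_zero |>.1 h3)
  have hcoe : (mulLp T (𝓕 φ) : ℝ → ℂ) =ᵐ[volume] fun x => T x * (𝓕 φ) x := by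
    unfold mulLp
    rw [dif_pos hmem]
    exact MemLp.coeFn_toLp _
  have hgB := s7_abs_B Tt hTc hTb
  have heq : S (mulLp T (𝓕 φ)) = S (mulLp (fun k => Tt ((|k| : ℝ) : ℂ)) (𝓕 φ)) := by
    rw [← sub_eq_zero, ← map_sub]
    refine hsupp _ ?_
    filter_upwards [hcoe, hgB.coe (𝓕 φ), Lp.coeFn_sub (mulLp T (𝓕 φ))
      (mulLp (fun k => Tt ((|k| : ℝ) : ℂ)) (𝓕 φ))] with x h1 h2 h3 hx
    rw [h3, Pi.sub_apply, h1, h2, abs_of_nonneg hx, hagree x hx, sub_self]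
  have hfin := s7_core S hV Tt hTc hTa hTb (𝓕 φ)
  rw [← heq, hS, hS, 𝓕.symm_apply_apply] at hfin
  rw [← hR, ← hR]
  gcongr
end
end

section
/- Let g : ℝ → ℂ be measurable and admit an extension g̃ : {ω ∈ ℂ : Im ω ≥ 0} → ℂ analytic on {Im ω > 0}, with |g̃(ω)| ≤ 1 everywhere and lim_{b→0+} g̃(k+ib) = g(k) for almost all k ∈ ℝ. Then for every a ∈ ℝ and every ψ ∈ L²(ℝ), ∫_{[a,∞)} |(F*(g·(Fψ)))(x)|² dx ≤ ∫_{[a,∞)} |ψ(x)|² dx; equivalently, g(P)* χ_{[a,∞)}(Q) g(P) ≤ χ_{[a,∞)}(Q), where g(P) := F* g(M) F and χ_{[a,∞)}(Q) is multiplication by the characteristic function of [a,∞). -/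
open MeasureTheory Complex Filter Set
open scoped ENNReal NNReal

noncomputable section

/-- `gt` is an extension of `g : ℝ → ℂ` to the closed upper half-plane which is analytic on the
open upper half-plane, bounded by one there, and has non-tangential boundary values `g` a.e. -/
structure HardyExt (g : ℝ → ℂ) (gt : ℂ → ℂ) : Prop where
  agree : ∀ a : ℝ, gt (a : ℂ) = g a
  analytic : DifferentiableOn ℂ gt {ω : ℂ | 0 < ω.im}
  bounded : ∀ ω : ℂ, 0 ≤ ω.im → ‖gt ω‖ ≤ 1
  boundary : ∀ᵐ a : ℝ ∂volume,
    Tendsto (fun b : ℝ => gt ((a : ℂ) + b * Complex.I)) (nhdsWithin 0 (Ioi 0)) (nhds (g a))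


lemma aux_line_zero (f : ℂ → ℂ) (C : ℝ) (hf : DifferentiableOn ℂ f {ω : ℂ | 0 < ω.im})
    (hb : ∀ ω : ℂ, 0 < ω.im → ‖f ω‖ * (1 + ‖ω‖ ^ 2) ≤ C) (b : ℝ) (hbp : 0 < b) :
    ∫ k : ℝ, f (k + b * I) = 0 := by
  have hC : 0 ≤ C := le_trans (by positivity) (hb I (by simp))
  have hb' : ∀ (ω : ℂ) (r : ℝ), 0 < ω.im → 0 ≤ r → r ≤ ‖ω‖ → ‖f ω‖ ≤ C * (1 + r ^ 2)⁻¹ := by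
    intro ω r h h0 hr
    rw [← div_eq_mul_inv, le_div_iff₀ (by positivity)]
    refine le_trans ?_ (hb ω h)
    gcongr
  have hcont : Continuous fun k : ℝ => f (k + b * I) := by
    refine hf.continuousOn.comp_continuous (by fun_prop) ?_
    intro x; simpa using hbp
  have hre : ∀ (x y : ℝ), |x| ≤ ‖(x + y * I : ℂ)‖ := by
    intro x y; simpa using Complex.abs_re_le_norm (x + y * I : ℂ)
  have him : ∀ (x y : ℝ), |y| ≤ ‖(x + y * I : ℂ)‖ := by
    intro x y; simpa using Complex.abs_im_le_norm (x + y * I : ℂ)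
  have hint : Integrable fun k : ℝ => f (k + b * I) := by
    refine (integrable_inv_one_add_sq.const_mul C).mono' hcont.aestronglyMeasurable ?_
    refine Eventually.of_forall fun k => ?_
    have := hb' (k + b * I) |k| (by simpa using hbp) (abs_nonneg _) (hre k b)
    simpa using this
  have hlim := intervalIntegral_tendsto_integral hint tendsto_neg_atTop_atBot
    (tendsto_id (α := ℝ) (x := atTop))
  refine tendsto_nhds_unique hlim ?_
  have hz : Tendsto (fun T : ℝ => 4 * C * (T⁻¹)) atTop (nhds 0) := by
    simpa using tendsto_inv_atTop_zero.const_mul (4 * C)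
  refine squeeze_zero_norm' ?_ hz
  filter_upwards [eventually_gt_atTop (0 : ℝ)] with T hT
  have hrect := integral_boundary_rect_eq_zero_of_differentiableOn f
    (-T + b * I) (T + (b + T : ℝ) * I) (by
      refine hf.mono ?_
      intro z hz
      rw [Complex.mem_reProdIm] at hz
      have h2 := hz.2
      simp only [add_im, neg_im, ofReal_im, mul_im, ofReal_re, I_im, I_re] at h2
      rw [uIcc_of_le (by simp; linarith)] at h2
      have := h2.1
      simp at this
      simp only [mem_ofPred_eq]; linarith)
  simp at hrect
  have e1 : ‖∫ x : ℝ in (-T)..T, f (x + (b + T) * I)‖ ≤ C * (1 + T ^ 2)⁻¹ * |T - (-T)| := by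
    refine intervalIntegral.norm_integral_le_of_norm_le_const fun x _ => ?_
    refine hb' _ T (by simp; linarith) hT.le ?_
    have := him x (b + T)
    push_cast at this
    exact le_trans (le_trans (by linarith) (le_abs_self _)) this
  have e2 : ∀ s : ℝ, |s| = T → ‖∫ y : ℝ in b..(b + T), f (s + y * I)‖
      ≤ C * (1 + T ^ 2)⁻¹ * |b + T - b| := by
    intro s hs
    refine intervalIntegral.norm_integral_le_of_norm_le_const fun y hy => ?_
    rw [uIoc_of_le (by linarith)] at hy
    refine hb' _ T (by simp; linarith [hy.1]) hT.le ?_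
    rw [← hs]; exact hre s y
  have e3 := e2 T (abs_of_pos hT)
  have e4 := e2 (-T) (by rw [abs_neg, abs_of_pos hT])
  rw [show T - (-T) = 2 * T by ring, abs_of_pos (by positivity)] at e1
  rw [show b + T - b = T by ring, abs_of_pos hT] at e3 e4
  push_cast at e4
  have e5 : ‖∫ x : ℝ in (-T)..T, f (x + b * I)‖ ≤ C * (1 + T ^ 2)⁻¹ * (2 * T)
      + C * (1 + T ^ 2)⁻¹ * T + C * (1 + T ^ 2)⁻¹ * T := by
    have : (∫ x : ℝ in (-T)..T, f (x + b * I)) = (∫ x : ℝ in (-T)..T, f (x + (b + T) * I))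
       - I * (∫ y : ℝ in b..(b + T), f (T + y * I))
       + I * (∫ y : ℝ in b..(b + T), f (-T + y * I)) := by
      linear_combination hrect
    rw [this]
    refine (norm_add_le _ _).trans (add_le_add ((norm_sub_le _ _).trans (add_le_add e1 ?_)) ?_)
    · simpa using e3
    · simpa using e4
  refine e5.trans ?_
  have : (1 + T ^ 2)⁻¹ * T ≤ T⁻¹ := by
    rw [inv_mul_le_iff₀ (by positivity), ← div_eq_mul_inv, le_div_iff₀ hT]; nlinarith
  nlinarith [mul_le_mul_of_nonneg_left this hC]

def KK (p q : ℝ) (ω : ℂ) : ℂ := ∫ t : ℝ in p..q, Complex.exp (I * ω * t)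

lemma KK_bound1 (p q : ℝ) (hp : 0 ≤ p) (hpq : p ≤ q) (ω : ℂ) (h : 0 ≤ ω.im) :
    ‖KK p q ω‖ ≤ q - p := by
  have : ‖KK p q ω‖ ≤ 1 * |q - p| := by
    refine intervalIntegral.norm_integral_le_of_norm_le_const fun t ht => ?_
    rw [uIoc_of_le hpq] at ht
    rw [Complex.norm_exp, Real.exp_le_one_iff]
    simp
    nlinarith [ht.1]
  rwa [one_mul, abs_of_nonneg (by linarith)] at this

lemma KK_eq (p q : ℝ) (ω : ℂ) (h : ω ≠ 0) :
    KK p q ω = (Complex.exp (I * ω * q) - Complex.exp (I * ω * p)) / (I * ω) :=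
  integral_exp_mul_complex (mul_ne_zero I_ne_zero h)

lemma KK_bound2 (p q : ℝ) (hp : 0 ≤ p) (hpq : p ≤ q) (ω : ℂ) (h : 0 ≤ ω.im) :
    ‖KK p q ω‖ * ‖ω‖ ≤ 2 := by
  by_cases h0 : ω = 0
  · simp [h0]
  have hexp : ∀ t : ℝ, 0 ≤ t → ‖Complex.exp (I * ω * t)‖ ≤ 1 := by
    intro t ht
    rw [Complex.norm_exp, Real.exp_le_one_iff]
    simp
    positivity
  rw [KK_eq p q ω h0, norm_div, norm_mul, norm_I, one_mul,
    div_mul_cancel₀ _ (norm_ne_zero_iff.2 h0)]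
  refine (norm_sub_le _ _).trans ?_
  linarith [hexp p hp, hexp q (hp.trans hpq)]

lemma KK_diff (p q : ℝ) : DifferentiableOn ℂ (KK p q) {ω : ℂ | 0 < ω.im} := by
  have hne : ∀ ω : ℂ, 0 < ω.im → ω ≠ 0 := by rintro ω h rfl; simp at h
  have : DifferentiableOn ℂ
      (fun ω : ℂ => (Complex.exp (I * ω * q) - Complex.exp (I * ω * p)) / (I * ω))
      {ω : ℂ | 0 < ω.im} := by
    refine DifferentiableOn.div (by fun_prop) (by fun_prop) ?_
    intro ω h; exact mul_ne_zero I_ne_zero (hne ω h)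
  exact this.congr fun ω h => KK_eq p q ω (hne ω h)

lemma KK_cont (p q : ℝ) : Continuous (KK p q) := by
  unfold KK
  exact intervalIntegral.continuous_parametric_intervalIntegral_of_continuous'
    (by fun_prop) _ _

lemma aux_boundary (g : ℝ → ℂ) (gt : ℂ → ℂ) (hgt : HardyExt g gt)
    (p q p' q' : ℝ) (hp : 0 ≤ p) (hpq : p ≤ q) (hp' : 0 ≤ p') (hpq' : p' ≤ q') :
    ∫ k : ℝ, gt k * (KK p q k * KK p' q' k) = 0 := by
  set C : ℝ := (q - p) * (q' - p') + 4 with hC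
  have hbd : ∀ ω : ℂ, 0 ≤ ω.im → ‖gt ω * (KK p q ω * KK p' q' ω)‖ * (1 + ‖ω‖ ^ 2) ≤ C := by
    intro ω h
    have a1 := KK_bound1 p q hp hpq ω h
    have a2 := KK_bound2 p q hp hpq ω h
    have b1 := KK_bound1 p' q' hp' hpq' ω h
    have b2 := KK_bound2 p' q' hp' hpq' ω h
    have g1 := hgt.bounded ω h
    rw [norm_mul, norm_mul]
    have m1 := mul_le_mul a1 b1 (norm_nonneg _) (by linarith)
    have m2 := mul_le_mul a2 b2 (by positivity) (by norm_num)
    have m3 : ‖KK p q ω‖ * ‖KK p' q' ω‖ * (1 + ‖ω‖ ^ 2) ≤ C := by nlinarith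
    have m4 : 0 ≤ ‖KK p q ω‖ * ‖KK p' q' ω‖ * (1 + ‖ω‖ ^ 2) := by positivity
    nlinarith [norm_nonneg (gt ω)]
  have hd : DifferentiableOn ℂ (fun ω => gt ω * (KK p q ω * KK p' q' ω)) {ω : ℂ | 0 < ω.im} :=
    hgt.analytic.mul ((KK_diff p q).mul (KK_diff p' q'))
  have hz : ∀ b : ℝ, 0 < b → ∫ k : ℝ, (gt (k + b * I) *
      (KK p q (k + b * I) * KK p' q' (k + b * I))) = 0 := fun b hb =>
    aux_line_zero _ C hd (fun ω h => hbd ω h.le) b hb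
  have hlim : Tendsto (fun b : ℝ => ∫ k : ℝ, (gt (k + b * I) *
      (KK p q (k + b * I) * KK p' q' (k + b * I)))) (nhdsWithin 0 (Ioi 0))
      (nhds (∫ k : ℝ, gt k * (KK p q k * KK p' q' k))) := by
    refine tendsto_integral_filter_of_dominated_convergence
      (fun k : ℝ => C * (1 + k ^ 2)⁻¹) ?_ ?_ (integrable_inv_one_add_sq.const_mul C) ?_
    · filter_upwards [self_mem_nhdsWithin] with b hb
      refine Continuous.aestronglyMeasurable ?_
      refine hd.continuousOn.comp_continuous (by fun_prop) ?_
      intro x; simpa using hb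
    · filter_upwards [self_mem_nhdsWithin] with b hb
      refine Eventually.of_forall fun k => ?_
      have hb' : 0 < b := hb
      have := hbd (k + b * I) (by simpa using hb'.le)
      rw [← div_eq_mul_inv, le_div_iff₀ (by positivity)]
      refine le_trans ?_ this
      gcongr ?_ * (1 + ?_)
      rw [← sq_abs]
      gcongr
      simpa using Complex.abs_re_le_norm (k + b * I : ℂ)
    · filter_upwards [hgt.boundary] with k hk
      rw [hgt.agree]
      refine hk.mul ?_
      have hc : Continuous fun b : ℝ => KK p q (k + b * I) * KK p' q' (k + b * I) :=
        ((KK_cont p q).comp (by fun_prop)).mul ((KK_cont p' q').comp (by fun_prop))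
      have := (hc.tendsto 0).mono_left (nhdsWithin_le_nhds (s := Ioi 0))
      simpa using this
  have hlim0 := hlim.congr' (f₂ := fun _ => (0 : ℂ)) (by
    filter_upwards [self_mem_nhdsWithin] with b hb using hz b hb)
  exact (tendsto_nhds_unique tendsto_const_nhds hlim0).symm

lemma aux_memLp (g : ℝ → ℂ) (hg : Measurable g) (hb : ∀ x, ‖g x‖ ≤ 1) (φ : H2) :
    MemLp (fun x => g x * φ x) 2 volume := by
  refine (Lp.memLp φ).mono (hg.aestronglyMeasurable.mul (Lp.aestronglyMeasurable φ)) ?_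
  refine Eventually.of_forall fun x => ?_
  rw [norm_mul]
  exact mul_le_of_le_one_left (norm_nonneg _) (hb x)

lemma mulLp_coe (g : ℝ → ℂ) (hg : Measurable g) (hb : ∀ x, ‖g x‖ ≤ 1) (φ : H2) :
    (mulLp g φ : ℝ → ℂ) =ᵐ[volume] fun x => g x * φ x := by
  unfold mulLp
  rw [dif_pos (aux_memLp g hg hb φ)]
  exact MemLp.coeFn_toLp _

lemma mulLp_norm (g : ℝ → ℂ) (hg : Measurable g) (hb : ∀ x, ‖g x‖ ≤ 1) (φ : H2) :
    ‖mulLp g φ‖ ≤ ‖φ‖ := by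
  refine Lp.norm_le_norm_of_ae_le ?_
  filter_upwards [mulLp_coe g hg hb φ] with x hx
  rw [hx, norm_mul]
  exact mul_le_of_le_one_left (norm_nonneg _) (hb x)

lemma mulLp_add (g : ℝ → ℂ) (hg : Measurable g) (hb : ∀ x, ‖g x‖ ≤ 1) (φ χ : H2) :
    mulLp g (φ + χ) = mulLp g φ + mulLp g χ := by
  refine Lp.ext ?_
  filter_upwards [mulLp_coe g hg hb φ, mulLp_coe g hg hb χ, mulLp_coe g hg hb (φ + χ),
    Lp.coeFn_add φ χ, Lp.coeFn_add (mulLp g φ) (mulLp g χ)] with x h1 h2 h3 h4 h5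
  rw [h3, h5, h4, Pi.add_apply, Pi.add_apply, h1, h2]; ring

lemma mulLp_adj (g : ℝ → ℂ) (hg : Measurable g) (hb : ∀ x, ‖g x‖ ≤ 1) (φ χ : H2) :
    inner ℂ φ (mulLp g χ) = inner ℂ (mulLp (fun x => (starRingEnd ℂ) (g x)) φ) χ := by
  rw [L2.inner_def, L2.inner_def]
  refine integral_congr_ae ?_
  filter_upwards [mulLp_coe g hg hb χ, mulLp_coe (fun x => (starRingEnd ℂ) (g x))
    (by fun_prop) (by simpa using hb) φ] with x h1 h2
  rw [h1, h2]
  simp only [RCLike.inner_apply, map_mul, Complex.conj_conj]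
  ring

def ind (c d : ℝ) : H2 :=
  indicatorConstLp 2 (measurableSet_Ioc (a := c) (b := d)) (by simp) (1 : ℂ)

lemma ind_inner (c d : ℝ) (u : H2) : inner ℂ (ind c d) u = ∫ x in Ioc c d, u x :=
  L2.inner_indicatorConstLp_one _ _ u

lemma ind_coe (c d : ℝ) : (ind c d : ℝ → ℂ) =ᵐ[volume] (Ioc c d).indicator fun _ => (1 : ℂ) :=
  indicatorConstLp_coeFn

lemma fourier_ind (𝓕 : H2 ≃ₗᵢ[ℂ] H2) (h𝓕 : IsFourier 𝓕) (c d : ℝ) (hcd : c ≤ d) :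
    (𝓕 (ind c d) : ℝ → ℂ) =ᵐ[volume] fun y : ℝ => (Real.sqrt (2 * Real.pi) : ℂ)⁻¹ *
      ∫ x : ℝ in c..d, Complex.exp (-(I * y * x)) := by
  have hint : Integrable (ind c d : ℝ → ℂ) volume := by
    refine Integrable.congr ?_ (ind_coe c d).symm
    exact (integrable_indicator_iff measurableSet_Ioc).2 (integrableOn_const (by simp))
  refine (h𝓕.1 _ hint).trans (Eventually.of_forall fun y => ?_)
  simp only
  congr 1
  rw [intervalIntegral.integral_of_le hcd, ← integral_indicator measurableSet_Ioc]
  refine integral_congr_ae ?_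
  filter_upwards [ind_coe c d] with x hx
  rw [hx]
  by_cases h : x ∈ Ioc c d <;> simp [h]

lemma aux_vanish (S : Set ℝ) (hS : MeasurableSet S)
    (hS2 : ∀ c d : ℝ, ∃ c' d' : ℝ, Ioc c d ∩ S = Ioc c' d') (u : H2)
    (hu : ∀ c d : ℝ, c < d → Ioc c d ⊆ S → inner ℂ (ind c d) u = 0) :
    ∀ᵐ x, x ∈ S → u x = 0 := by
  have hloc : LocallyIntegrable (S.indicator u) volume :=
    ((Lp.memLp u).indicator hS).locallyIntegrable (by norm_num)
  have hzero : ∀ c d : ℝ, ∫ x in Ioc c d, S.indicator u x = 0 := by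
    intro c d
    rw [setIntegral_indicator hS]
    obtain ⟨c', d', h⟩ := hS2 c d
    rw [h]
    rcases lt_or_ge c' d' with hlt | hle
    · rw [← ind_inner]
      exact hu c' d' hlt (h ▸ inter_subset_right)
    · simp [Ioc_eq_empty_of_le hle]
  filter_upwards [LocallyIntegrable.ae_hasDerivAt_integral hloc] with x hx hxS
  have h1 := hx 0
  have h2 : (fun x => ∫ t : ℝ in (0 : ℝ)..x, S.indicator u t) = fun _ => 0 := by
    funext y
    rw [intervalIntegral, hzero, hzero, sub_zero]
  rw [h2] at h1
  have := h1.unique (hasDerivAt_const x (0 : ℂ))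
  rwa [indicator_of_mem hxS] at this

lemma aux_intervals (g : ℝ → ℂ) (hg : Measurable g) (gt : ℂ → ℂ) (hgt : HardyExt g gt)
    (𝓕 : H2 ≃ₗᵢ[ℂ] H2) (h𝓕 : IsFourier 𝓕) (a c d c' d' : ℝ) (hcd : c ≤ d) (hda : d ≤ a)
    (hac : a ≤ c') (hcd' : c' ≤ d') :
    inner ℂ (𝓕 (ind c' d')) (mulLp g (𝓕 (ind c d))) = 0 := by
  have hb : ∀ x, ‖g x‖ ≤ 1 := fun x => by
    rw [← hgt.agree]; exact hgt.bounded _ (by simp)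
  have key := aux_boundary g gt hgt (a - d) (a - c) (c' - a) (d' - a)
    (by linarith) (by linarith) (by linarith) (by linarith)
  rw [L2.inner_def]
  have : ∀ᵐ k : ℝ, inner ℂ (𝓕 (ind c' d') k) (mulLp g (𝓕 (ind c d)) k) =
      ((Real.sqrt (2 * Real.pi) : ℂ)⁻¹ * (Real.sqrt (2 * Real.pi) : ℂ)⁻¹) *
      (gt k * (KK (a - d) (a - c) k * KK (c' - a) (d' - a) k)) := by
    filter_upwards [mulLp_coe g hg hb (𝓕 (ind c d)), fourier_ind 𝓕 h𝓕 c d hcd,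
      fourier_ind 𝓕 h𝓕 c' d' hcd'] with k h1 h2 h3
    rw [h1, h2, h3, hgt.agree]
    have e1 : KK (a - d) (a - c) k =
        Complex.exp (I * k * a) * ∫ x : ℝ in c..d, Complex.exp (-(I * k * x)) := by
      unfold KK
      rw [← intervalIntegral.integral_comp_sub_left (fun t : ℝ => Complex.exp (I * k * t)) a,
        ← intervalIntegral.integral_const_mul]
      congr 1; funext x
      rw [← Complex.exp_add]; push_cast; ring_nf
    have e2 : KK (c' - a) (d' - a) k =
        Complex.exp (-(I * k * a)) *
          (starRingEnd ℂ) (∫ x : ℝ in c'..d', Complex.exp (-(I * k * x))) := by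
      unfold KK
      rw [← intervalIntegral.integral_comp_sub_right (fun t : ℝ => Complex.exp (I * k * t)) a,
        intervalIntegral.integral_of_le hcd', intervalIntegral.integral_of_le hcd',
        ← integral_conj, ← integral_const_mul]
      congr 1; funext x
      rw [← Complex.exp_conj, ← Complex.exp_add]
      simp
      ring_nf
    have e3 : Complex.exp (I * k * a) * Complex.exp (-(I * k * a)) = 1 := by
      rw [← Complex.exp_add]; simp
    rw [e1, e2]
    simp only [RCLike.inner_apply, map_mul, map_inv₀, Complex.conj_ofReal]
    linear_combination (-(Real.sqrt (2 * Real.pi) : ℂ)⁻¹ * (Real.sqrt (2 * Real.pi) : ℂ)⁻¹ * g k *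
      (∫ x : ℝ in c..d, Complex.exp (-(I * k * x))) *
          (starRingEnd ℂ) (∫ x : ℝ in c'..d', Complex.exp (-(I * k * x)))) * e3
  rw [integral_congr_ae this, integral_const_mul, key, mul_zero]

lemma aux_support (g : ℝ → ℂ) (hg : Measurable g) (gt : ℂ → ℂ) (hgt : HardyExt g gt)
    (𝓕 : H2 ≃ₗᵢ[ℂ] H2) (h𝓕 : IsFourier 𝓕) (a : ℝ) (ψ : H2)
    (hψ : ∀ᵐ x, x ∈ Ioi a → ψ x = 0) :
    ∀ᵐ x, x ∈ Ioi a → (𝓕.symm (mulLp g (𝓕 ψ))) x = 0 := by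
  have hb : ∀ x, ‖g x‖ ≤ 1 := fun x => by
    rw [← hgt.agree]; exact hgt.bounded _ (by simp)
  have hadj : ∀ φ χ : H2, inner ℂ (𝓕.symm (mulLp (fun x => (starRingEnd ℂ) (g x)) (𝓕 φ))) χ =
      inner ℂ (𝓕 φ) (mulLp g (𝓕 χ)) := by
    intro φ χ
    rw [mulLp_adj g hg hb, ← 𝓕.inner_map_map, 𝓕.apply_symm_apply]
  refine aux_vanish _ measurableSet_Ioi (fun c d => ⟨max c a, d, Ioc_inter_Ioi⟩) _ ?_
  intro c' d' hcd' hsub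
  have hac : a ≤ c' := by
    by_contra hlt
    push Not at hlt
    have := @hsub (min d' a) ⟨lt_min hcd' hlt, min_le_left _ _⟩
    exact absurd (mem_Ioi.1 this) (not_lt.2 (min_le_right _ _))
  rw [← 𝓕.inner_map_map, 𝓕.apply_symm_apply, ← hadj]
  have hv := aux_vanish (Iic a) measurableSet_Iic (fun c d => ⟨c, min d a, Ioc_inter_Iic c d a⟩)
    (𝓕.symm (mulLp (fun x => (starRingEnd ℂ) (g x)) (𝓕 (ind c' d')))) (by
      intro c d hcd hs
      rw [← inner_conj_symm, hadj, aux_intervals g hg gt hgt 𝓕 h𝓕 a c d c' d' hcd.le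
        (hs (right_mem_Ioc.2 hcd)) hac hcd'.le, map_zero])
  rw [L2.inner_def]
  refine integral_eq_zero_of_ae ?_
  filter_upwards [hv, hψ] with x h1 h2
  rcases le_or_gt x a with h | h
  · rw [h1 h]; simp
  · rw [h2 h]; simp

lemma norm_sq_eq (u : H2) : ‖u‖ ^ 2 = ∫ x, ‖u x‖ ^ 2 := by
  have h := L2.inner_def (𝕜 := ℂ) u u
  simp_rw [inner_self_eq_norm_sq_to_K] at h
  have h2 : ((∫ x, ‖u x‖ ^ 2 : ℝ) : ℂ) = ∫ x, ((‖u x‖ : ℂ)) ^ 2 := by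
    rw [← integral_complex_ofReal]; simp
  have h3 : ((‖u‖ ^ 2 : ℝ) : ℂ) = ((∫ x, ‖u x‖ ^ 2 : ℝ) : ℂ) := by
    rw [h2]; push_cast; exact h
  exact_mod_cast h3

/-- If `g : ℝ → ℂ` is measurable with a bounded analytic extension to the
upper half-plane having boundary values `g` a.e., then
`g(P)* χ_{[a,∞)}(Q) g(P) ≤ χ_{[a,∞)}(Q)` for every `a ∈ ℝ`: for all `ψ ∈ L²(ℝ)`,
`∫_{[a,∞)} |(F*(g·(Fψ)))(x)|² dx ≤ ∫_{[a,∞)} |ψ(x)|² dx`. -/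
theorem statement9 (g : ℝ → ℂ) (hg : Measurable g) (gt : ℂ → ℂ) (hgt : HardyExt g gt)
    (𝓕 : H2 ≃ₗᵢ[ℂ] H2) (h𝓕 : IsFourier 𝓕) (a : ℝ) (ψ : H2) :
    ∫ x in Set.Ici a, ‖(𝓕.symm (mulLp g (𝓕 ψ))) x‖ ^ 2 ≤
      ∫ x in Set.Ici a, ‖ψ x‖ ^ 2 := by
  have hb : ∀ x, ‖g x‖ ≤ 1 := fun x => by
    rw [← hgt.agree]; exact hgt.bounded _ (by simp)
  have m1 := (Lp.memLp ψ).indicator (measurableSet_Iic (a := a))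
  have m2 := (Lp.memLp ψ).indicator (measurableSet_Ioi (a := a))
  have c1 := m1.coeFn_toLp
  have c2 := m2.coeFn_toLp
  set ψ1 : H2 := m1.toLp _ with hψ1
  set ψ2 : H2 := m2.toLp _ with hψ2
  have hsum : ψ = ψ1 + ψ2 := by
    refine Lp.ext ?_
    filter_upwards [c1, c2, Lp.coeFn_add ψ1 ψ2] with x h1 h2 h3
    rw [h3, Pi.add_apply, h1, h2]
    rcases le_or_gt x a with h | h
    · simp [indicator, h]
    · simp [indicator, h, not_le.2 h]
  have hs := aux_support g hg gt hgt 𝓕 h𝓕 a ψ1 (by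
    filter_upwards [c1] with x h1 hx
    rw [h1]
    have hx' : a < x := hx
    simp [indicator, not_le.2 hx'])
  set u : H2 := 𝓕.symm (mulLp g (𝓕 ψ2)) with hu
  have hT : 𝓕.symm (mulLp g (𝓕 ψ)) = 𝓕.symm (mulLp g (𝓕 ψ1)) + u := by
    rw [hu, ← map_add, ← mulLp_add g hg hb, ← map_add, ← hsum]
  rw [integral_Ici_eq_integral_Ioi, integral_Ici_eq_integral_Ioi]
  have hL : ∫ x in Ioi a, ‖(𝓕.symm (mulLp g (𝓕 ψ))) x‖ ^ 2 = ∫ x in Ioi a, ‖u x‖ ^ 2 := by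
    refine setIntegral_congr_ae measurableSet_Ioi ?_
    filter_upwards [hs, Lp.coeFn_add (𝓕.symm (mulLp g (𝓕 ψ1))) u] with x h1 h2 hx
    rw [hT, h2, Pi.add_apply, h1 hx, zero_add]
  have hR : ∫ x in Ioi a, ‖ψ x‖ ^ 2 = ∫ x, ‖ψ2 x‖ ^ 2 := by
    rw [← integral_indicator measurableSet_Ioi]
    refine integral_congr_ae ?_
    filter_upwards [c2] with x h2
    rw [h2]
    by_cases hx : x ∈ Ioi a <;> simp [hx]
  rw [hL, hR]
  calc ∫ x in Ioi a, ‖u x‖ ^ 2 ≤ ∫ x, ‖u x‖ ^ 2 :=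
        setIntegral_le_integral ((Lp.memLp u).integrable_norm_pow (by norm_num))
          (Eventually.of_forall fun x => by positivity)
    _ = ‖u‖ ^ 2 := (norm_sq_eq u).symm
    _ ≤ ‖ψ2‖ ^ 2 := by
        gcongr
        rw [hu, LinearIsometryEquiv.norm_map]
        exact (mulLp_norm g hg hb _).trans (LinearIsometryEquiv.norm_map _ _).le
    _ = _ := norm_sq_eq ψ2
end
end

section
/- Let μ be a Borel probability measure on ℝ, let a ∈ ℝ, and let φ ∈ L²(ℝ) satisfy (Fφ)(k) = 0 for almost all k > 0 (only non-positive momenta). For t ∈ ℝ define the freely evolved state φ_t := F*(k ↦ e^{-itk²}(Fφ)(k)). Then lim_{t→+∞} ∫_ℝ μ([a−x, ∞))² |φ_t(x)|² dx = 0. Equivalently, the localization observable E = μ * E^Q, whose value E([a,∞)) is the multiplication operator by x ↦ μ([a−x,∞)), satisfies s-lim_{t→∞} E([a,∞)) e^{-itH₀} P̌₋ = 0, where P̌₋ is the projection onto states with Fourier transform supported in (−∞,0]. -/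
open MeasureTheory Complex Filter Set
open scoped ENNReal NNReal

noncomputable section

lemma H2_norm_sq (f : H2) : ∫ x, ‖f x‖ ^ 2 = ‖f‖ ^ 2 := by
  have h := L2.inner_def (𝕜 := ℂ) f f
  rw [inner_self_eq_norm_sq_to_K] at h
  have h2 : ∀ x : ℝ, inner ℂ (f x) (f x) = ((‖f x‖ ^ 2 : ℝ) : ℂ) := by
    intro x
    rw [inner_self_eq_norm_sq_to_K]; push_cast; rfl
  simp_rw [h2] at h
  erw [integral_ofReal] at h
  symm
  have h3 : (((‖f‖ ^ 2 : ℝ)) : ℂ) = ((∫ x, ‖f x‖ ^ 2 : ℝ) : ℂ) := by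
    push_cast; exact h
  exact_mod_cast h3

lemma H2_int_sq (f : H2) : Integrable (fun x => ‖f x‖ ^ 2) :=
  (Lp.memLp f).integrable_norm_pow (by norm_num)

def ph (t : ℝ) : ℝ → ℂ := fun k : ℝ => Complex.exp (-(Complex.I * t * k ^ 2))

lemma ph_norm (t k : ℝ) : ‖ph t k‖ = 1 := by
  have : ph t k = Complex.exp ((-(t * k ^ 2) : ℝ) * Complex.I) := by
    simp only [ph]; congr 1; push_cast; ring
  rw [this, Complex.norm_exp_ofReal_mul_I]

lemma ph_cont (t : ℝ) : Continuous (ph t) := by unfold ph; fun_prop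

lemma ph_memLp (t : ℝ) (f : H2) : MemLp (fun x => ph t x * f x) 2 volume := by
  refine (Lp.memLp f).of_le ((ph_cont t).aestronglyMeasurable.mul (Lp.aestronglyMeasurable f)) ?_
  refine Eventually.of_forall fun x => ?_
  simp [ph_norm]

lemma mul_coe (t : ℝ) (f : H2) : mulLp (ph t) f =ᵐ[volume] fun x => ph t x * f x := by
  rw [mulLp, dif_pos (ph_memLp t f)]
  exact MemLp.coeFn_toLp _

lemma mul_sub' (t : ℝ) (f g : H2) :
    mulLp (ph t) (f - g) = mulLp (ph t) f - mulLp (ph t) g := by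
  apply Lp.ext
  filter_upwards [mul_coe t f, mul_coe t g, mul_coe t (f - g), Lp.coeFn_sub f g,
    Lp.coeFn_sub (mulLp (ph t) f) (mulLp (ph t) g)] with x h1 h2 h3 h4 h5
  rw [h3, h5, h4]; simp [h1, h2]; ring

lemma mul_norm (t : ℝ) (f : H2) : ‖mulLp (ph t) f‖ = ‖f‖ := by
  have : ‖mulLp (ph t) f‖ ^ 2 = ‖f‖ ^ 2 := by
    rw [← H2_norm_sq, ← H2_norm_sq]
    refine integral_congr_ae ?_
    filter_upwards [mul_coe t f] with x h
    rw [h]; simp [ph_norm]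
  exact (pow_left_inj₀ (norm_nonneg _) (norm_nonneg _) two_ne_zero).1 this

lemma approx (ψ : H2) (hψ : ∀ᵐ k ∂(volume.restrict (Set.Ioi (0 : ℝ))), ψ k = 0)
    (δ : ℝ) (hδ : 0 < δ) : ∃ (ε R : ℝ) (g : ℝ → ℂ) (χ : H2), 0 < ε ∧ ε < R ∧ ContDiff ℝ 1 g ∧
      χ =ᵐ[volume] (Set.Icc (-R) (-ε)).indicator g ∧ ‖ψ - χ‖ ^ 2 ≤ δ := by
  obtain ⟨g, hg, hgd, hgn⟩ := (Lp.memLp ψ).exist_eLpNorm_sub_le (by norm_num) (by norm_num)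
    (ε := Real.sqrt (δ / 2)) (by positivity)
  have hgm : MemLp g 2 volume := hgd.continuous.memLp_of_hasCompactSupport hg
  have hgn2 : ‖ψ - hgm.toLp g‖ ^ 2 ≤ δ / 2 := by
    have : ‖ψ - hgm.toLp g‖ ≤ Real.sqrt (δ / 2) := by
      rw [Lp.norm_def]
      refine ENNReal.toReal_le_of_le_ofReal (by positivity) ?_
      refine le_trans (le_of_eq ?_) hgn
      refine eLpNorm_congr_ae ?_
      filter_upwards [Lp.coeFn_sub ψ (hgm.toLp g), hgm.coeFn_toLp] with x h1 h2
      rw [h1]; simp [h2]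
    calc _ ≤ (Real.sqrt (δ / 2)) ^ 2 := by gcongr
      _ = _ := Real.sq_sqrt (by positivity)
  have hi := H2_int_sq ψ
  have hc : Continuous (fun b => ∫ x in (0:ℝ)..b, ‖ψ x‖ ^ 2) :=
    intervalIntegral.continuous_primitive (fun a b => hi.intervalIntegrable) 0
  obtain ⟨ε, hε, hε2⟩ : ∃ ε > 0, ∫ x in Set.Ioc (-ε) 0, ‖ψ x‖ ^ 2 ≤ δ / 2 := by
    obtain ⟨η, hη, h⟩ := Metric.continuous_iff.1 hc 0 (δ / 2) (by positivity)
    refine ⟨η / 2, by positivity, ?_⟩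
    have h1 := h (-(η / 2)) (by simpa [abs_of_pos hη] using hη)
    rw [← intervalIntegral.integral_of_le (by linarith), intervalIntegral.integral_symm]
    simp only [intervalIntegral.integral_same, dist_zero_right, Real.norm_eq_abs] at h1
    linarith [neg_abs_le (∫ x in (0:ℝ)..(-(η / 2)), ‖ψ x‖ ^ 2)]
  obtain ⟨R₀, hR₀⟩ := hg.isCompact.isBounded.subset_closedBall 0
  set R := max R₀ (ε + 1) with hR
  have hεR : ε < R := lt_of_lt_of_le (by linarith) (le_max_right _ _)
  have hgR : ∀ x, x < -R → g x = 0 := by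
    intro x hx
    by_contra hne
    have := hR₀ (subset_tsupport g hne)
    rw [mem_closedBall_zero_iff, Real.norm_eq_abs] at this
    have h2 : R₀ ≤ R := le_max_left _ _
    linarith [neg_abs_le x]
  have hχm : MemLp ((Set.Icc (-R) (-ε)).indicator g) 2 volume := hgm.indicator measurableSet_Icc
  refine ⟨ε, R, g, hχm.toLp _, hε, hεR, hgd.of_le (by exact_mod_cast le_top), hχm.coeFn_toLp, ?_⟩
  rw [← H2_norm_sq]
  have hI2 : Integrable ((Set.Ioc (-ε) 0).indicator (fun x => ‖ψ x‖ ^ 2)) :=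
    hi.indicator measurableSet_Ioc
  calc ∫ x, ‖(ψ - hχm.toLp _ : H2) x‖ ^ 2
      ≤ ∫ x, (‖(ψ - hgm.toLp g : H2) x‖ ^ 2 + (Set.Ioc (-ε) 0).indicator (fun x => ‖ψ x‖ ^ 2) x) := by
        refine integral_mono_ae (H2_int_sq _) ((H2_int_sq _).add hI2) ?_
        filter_upwards [Lp.coeFn_sub ψ (hgm.toLp g), hgm.coeFn_toLp, hχm.coeFn_toLp,
          Lp.coeFn_sub ψ (hχm.toLp _), (ae_restrict_iff' measurableSet_Ioi).1 hψ] with x h1 h2 h3 h4 h5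
        rw [h1, h4]
        simp only [Pi.sub_apply, h2, h3]
        by_cases hx0 : 0 < x
        · rw [h5 hx0, Set.indicator_of_notMem (by intro h; linarith [h.2]),
            Set.indicator_of_notMem (by intro h; linarith [h.2])]
          simp
        · by_cases hx1 : -ε < x
          · rw [Set.indicator_of_notMem (by intro h; linarith [h.2]),
              Set.indicator_of_mem (show x ∈ Set.Ioc (-ε) 0 from ⟨hx1, not_lt.1 hx0⟩)]
            simp
          · rw [Set.indicator_of_notMem (s := Set.Ioc (-ε) 0) (by intro h; exact hx1 h.1)]
            by_cases hx2 : x < -R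
            · rw [Set.indicator_of_notMem (by intro h; linarith [h.1]), hgR x hx2]; simp
            · rw [Set.indicator_of_mem (show x ∈ Set.Icc (-R) (-ε) from ⟨not_lt.1 hx2, not_lt.1 hx1⟩)]; simp
    _ ≤ δ := by
        rw [integral_add (H2_int_sq _) hI2, H2_norm_sq, integral_indicator measurableSet_Ioc]
        linarith

lemma osc (g : ℝ → ℂ) (hg : ContDiff ℝ 1 g) (ε R : ℝ) (hε : 0 < ε) (hR : ε < R) :
    ∃ C, 0 ≤ C ∧ ∀ t x : ℝ, 0 < t → -(t * ε) ≤ x →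
      ‖∫ k in (-R)..(-ε), Complex.exp (Complex.I * x * k) * (ph t k * g k)‖ ≤
        C / (x + 2 * t * ε) := by
  obtain ⟨M₀, hM₀⟩ := (isCompact_Icc (a := -R) (b := -ε)).exists_bound_of_continuousOn
    hg.continuous.continuousOn
  have hgc := hg.continuous_deriv le_rfl
  obtain ⟨M₁, hM₁⟩ := (isCompact_Icc (a := -R) (b := -ε)).exists_bound_of_continuousOn
    hgc.continuousOn
  set M := max M₀ M₁
  have hM0 : ∀ k ∈ Set.Icc (-R) (-ε), ‖g k‖ ≤ M := fun k hk => (hM₀ k hk).trans (le_max_left _ _)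
  have hM1 : ∀ k ∈ Set.Icc (-R) (-ε), ‖deriv g k‖ ≤ M :=
    fun k hk => (hM₁ k hk).trans (le_max_right _ _)
  have hM : 0 ≤ M := (norm_nonneg _).trans (hM0 (-ε) ⟨by linarith, le_rfl⟩)
  refine ⟨2 * M + (M + 2 * M / ε) * (R - ε), by
    have : 0 ≤ R - ε := by linarith
    positivity, ?_⟩
  intro t x ht hx
  set A := x + 2 * t * ε with hA
  have htε : 0 < t * ε := by positivity
  have hAt : t * ε ≤ A := by rw [hA]; linarith
  have hApos : 0 < A := by linarith
  set D : ℝ → ℝ := fun k => x - 2 * t * k with hD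
  have hDA : ∀ k ∈ Set.Icc (-R) (-ε), A ≤ D k := by
    intro k hk
    have := mul_le_mul_of_nonneg_left hk.2 (by positivity : 0 ≤ 2 * t)
    simp only [hA, hD]; linarith
  set F : ℝ → ℂ := fun k => Complex.exp (Complex.I * x * k) * ph t k with hF
  have hFn : ∀ k, ‖F k‖ = 1 := by
    intro k
    have : Complex.exp (Complex.I * x * k) = Complex.exp ((x * k : ℝ) * Complex.I) := by
      congr 1; push_cast; ring
    simp only [hF]
    rw [norm_mul, ph_norm, this, Complex.norm_exp_ofReal_mul_I, one_mul]
  have hFd : ∀ k, HasDerivAt F (Complex.I * D k * F k) k := by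
    intro k
    have e : F = fun k : ℝ => Complex.exp (Complex.I * x * k - Complex.I * t * k ^ 2) := by
      funext k; simp only [hF, ph]; rw [← Complex.exp_add]; congr 1
    have h1 : HasDerivAt (fun z : ℂ => Complex.I * x * z - Complex.I * t * z ^ 2)
        (Complex.I * x * 1 - Complex.I * t * (2 * k)) (k : ℂ) := by
      refine ((hasDerivAt_id _).const_mul _).sub (HasDerivAt.const_mul _ ?_)
      simpa using hasDerivAt_pow 2 (k : ℂ)
    have h2 := (h1.cexp).comp_ofReal
    rw [e]
    convert h2 using 1
    simp only [hD]; push_cast; ring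
  have hFc : Continuous F := by
    simp only [hF]; exact (by fun_prop : Continuous fun k : ℝ => Complex.exp (Complex.I * x * k)).mul (ph_cont t)
  set G : ℝ → ℂ := fun k => F k * (deriv g k / (Complex.I * D k) +
    2 * t * g k / (Complex.I * D k ^ 2)) with hG
  have hDc : Continuous fun k => (D k : ℂ) := by simp only [hD]; fun_prop
  have hDd : ∀ k, HasDerivAt (fun k => (D k : ℂ)) (-(2 * t) : ℂ) k := by
    intro k
    have : HasDerivAt (fun z : ℂ => (x : ℂ) - 2 * t * z) (-(2 * t * 1) : ℂ) (k : ℂ) :=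
      ((hasDerivAt_id _).const_mul _).const_sub _
    have h2 := this.comp_ofReal
    simp only [hD]; push_cast
    simpa using h2
  have hIcc : Set.uIcc (-R) (-ε) = Set.Icc (-R) (-ε) := Set.uIcc_of_le (by linarith)
  have hDne : ∀ k ∈ Set.Icc (-R) (-ε), (D k : ℂ) ≠ 0 := by
    intro k hk
    have := hDA k hk
    exact_mod_cast (by linarith : 0 < D k).ne'
  have hder : ∀ k ∈ Set.uIcc (-R) (-ε),
      HasDerivAt (fun k => F k * g k / (Complex.I * D k)) (F k * g k + G k) k := by
    intro k hk
    rw [hIcc] at hk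
    have hne := hDne k hk
    have hgk : HasDerivAt g (deriv g k) k := (hg.differentiable one_ne_zero k).hasDerivAt
    have := ((hFd k).mul hgk).div ((hDd k).const_mul Complex.I)
      (mul_ne_zero Complex.I_ne_zero hne)
    have e : F k * g k + G k = ((Complex.I * D k * F k * g k + F k * deriv g k) * (Complex.I * D k)
        - (F k * g k) * (Complex.I * -(2 * t))) / (Complex.I * D k) ^ 2 := by
      simp only [hG]
      have hI := Complex.I_ne_zero
      generalize (D k : ℂ) = d at hne ⊢
      generalize F k = u
      generalize deriv g k = w
      generalize g k = v
      field_simp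
      ring
    rw [e]
    exact this
  have hGc : ContinuousOn G (Set.uIcc (-R) (-ε)) := by
    rw [hIcc]
    refine hFc.continuousOn.mul (ContinuousOn.add ?_ ?_)
    · refine hgc.continuousOn.div (by fun_prop) ?_
      intro k hk; exact mul_ne_zero Complex.I_ne_zero (hDne k hk)
    · refine ContinuousOn.div ?_ (by fun_prop) ?_
      · exact (continuous_const.mul hg.continuous).continuousOn
      · intro k hk; exact mul_ne_zero Complex.I_ne_zero (pow_ne_zero _ (hDne k hk))
  have hGi : IntervalIntegrable G volume (-R) (-ε) := hGc.intervalIntegrable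
  have hFgi : IntervalIntegrable (fun k => F k * g k) volume (-R) (-ε) :=
    (hFc.mul hg.continuous).intervalIntegrable _ _
  have key := intervalIntegral.integral_eq_sub_of_hasDerivAt hder (hFgi.add hGi)
  rw [intervalIntegral.integral_add hFgi hGi] at key
  have hbd : ∀ k ∈ Set.Icc (-R) (-ε), ‖F k * g k / (Complex.I * D k)‖ ≤ M / A := by
    intro k hk
    have h1 := hDA k hk
    rw [norm_div, norm_mul, hFn, one_mul, norm_mul, Complex.norm_I, one_mul, Complex.norm_real,
      Real.norm_of_nonneg (by linarith)]
    exact div_le_div₀ hM (hM0 k hk) hApos h1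
  have hGb : ∀ k ∈ Set.uIoc (-R) (-ε), ‖G k‖ ≤ (M + 2 * M / ε) / A := by
    intro k hk
    rw [Set.uIoc_of_le (by linarith)] at hk
    have hk := Set.Ioc_subset_Icc_self hk
    have h1 := hDA k hk
    have hDp : 0 < D k := by linarith
    simp only [hG]
    rw [norm_mul, hFn, one_mul]
    refine (norm_add_le _ _).trans ?_
    rw [norm_div, norm_div, norm_mul, norm_mul, norm_mul, norm_mul, norm_pow, Complex.norm_I,
      one_mul, one_mul, Complex.norm_real, Complex.norm_real, Real.norm_of_nonneg hDp.le,
      Real.norm_of_nonneg ht.le, Complex.norm_ofNat]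
    have e1 : ‖deriv g k‖ / D k ≤ M / A := div_le_div₀ hM (hM1 k hk) hApos h1
    have e2 : 2 * t * ‖g k‖ / D k ^ 2 ≤ 2 * M / ε / A := by
      have : 2 * t * ‖g k‖ / D k ^ 2 ≤ 2 * t * M / (t * ε * A) := by
        refine div_le_div₀ (by positivity) ?_ (by positivity) ?_
        · exact mul_le_mul_of_nonneg_left (hM0 k hk) (by positivity)
        · rw [sq]; exact mul_le_mul (by linarith) h1 hApos.le hDp.le
      refine this.trans (le_of_eq ?_)
      field_simp
    rw [add_div]; exact add_le_add e1 e2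
  have hGn := intervalIntegral.norm_integral_le_of_norm_le_const hGb
  rw [abs_of_pos (by linarith : 0 < -ε - -R)] at hGn
  have e0 : (fun k : ℝ => Complex.exp (Complex.I * x * k) * (ph t k * g k)) = fun k => F k * g k := by
    funext k; simp only [hF]; ring
  rw [e0, eq_sub_of_add_eq key]
  have b1 := hbd (-ε) ⟨by linarith, le_rfl⟩
  have b2 := hbd (-R) ⟨le_rfl, by linarith⟩
  refine (norm_sub_le _ _).trans ((add_le_add ((norm_sub_le _ _).trans (add_le_add b1 b2)) hGn).trans
    (le_of_eq ?_))
  field_simp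
  ring

lemma int_tail (C A c : ℝ) (hc : 0 < c + A) :
    IntegrableOn (fun x : ℝ => (C / (x + A)) ^ 2) (Set.Ioi c) ∧
      ∫ x in Set.Ioi c, (C / (x + A)) ^ 2 = C ^ 2 / (c + A) := by
  have hd : ∀ x ∈ Set.Ici c, HasDerivAt (fun x => -(C ^ 2 / (x + A))) ((C / (x + A)) ^ 2) x := by
    intro x hx
    have hne : x + A ≠ 0 := by have : c ≤ x := hx; linarith
    have := ((hasDerivAt_const x (C ^ 2)).div ((hasDerivAt_id x).add_const A) hne).neg
    have e : (C / (x + A)) ^ 2 = -((0 * (id x + A) - C ^ 2 * 1) / (id x + A) ^ 2) := by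
      simp only [id]
      field_simp
      ring
    rw [e]
    exact this
  have hl : Tendsto (fun x => -(C ^ 2 / (x + A))) atTop (nhds (-0)) :=
    (tendsto_const_nhds.div_atTop (tendsto_atTop_add_const_right _ _ tendsto_id)).neg
  refine ⟨integrableOn_Ioi_deriv_of_nonneg' hd (fun _ _ => by positivity) hl, ?_⟩
  rw [integral_Ioi_of_hasDerivAt_of_nonneg' hd (fun _ _ => by positivity) hl]
  ring

section
variable (μ : Measure ℝ) [IsProbabilityMeasure μ] (a : ℝ)

def mm (μ : Measure ℝ) (a : ℝ) (x : ℝ) : ℝ := (μ (Set.Ici (a - x))).toReal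

lemma mm_mono : Monotone (mm μ a) := by
  intro x y h
  exact ENNReal.toReal_mono (measure_ne_top _ _) (measure_mono (Set.Ici_subset_Ici.2 (by linarith)))

lemma mm_nonneg (x : ℝ) : 0 ≤ mm μ a x := ENNReal.toReal_nonneg

lemma mm_le (x : ℝ) : mm μ a x ≤ 1 := by
  have := ENNReal.toReal_mono ENNReal.one_ne_top (prob_le_one (μ := μ) (s := Set.Ici (a - x)))
  simpa [mm] using this

lemma mm_sq_le (x : ℝ) : mm μ a x ^ 2 ≤ 1 := pow_le_one₀ (mm_nonneg μ a x) (mm_le μ a x)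

lemma mm_tendsto (ε : ℝ) (hε : 0 < ε) :
    Tendsto (fun t : ℝ => mm μ a (-(t * ε))) atTop (nhds 0) := by
  have h := tendsto_measure_iInter_atTop (μ := μ) (s := fun t : ℝ => Set.Ici t)
    (fun i => measurableSet_Ici.nullMeasurableSet) (fun x y h => Set.Ici_subset_Ici.2 h)
    ⟨0, measure_ne_top _ _⟩
  have he : (⋂ n : ℝ, Set.Ici n) = ∅ := by
    ext x; simp only [Set.mem_iInter, Set.mem_Ici, Set.mem_empty_iff_false, iff_false, not_forall]
    exact ⟨x + 1, by linarith⟩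
  rw [he, measure_empty] at h
  have h2 := (ENNReal.tendsto_toReal ENNReal.zero_ne_top).comp h
  have h3 : Tendsto (fun t : ℝ => a - -(t * ε)) atTop atTop := by
    simp only [sub_neg_eq_add]
    exact tendsto_atTop_add_const_left _ _ (tendsto_id.atTop_mul_const hε)
  exact h2.comp h3

lemma mm_int (f : H2) : Integrable (fun x => mm μ a x ^ 2 * ‖f x‖ ^ 2) := by
  refine (H2_int_sq f).mono ?_ ?_
  · exact (((mm_mono μ a).measurable.pow_const 2).aestronglyMeasurable).mul
      (H2_int_sq f).aestronglyMeasurable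
  · refine Eventually.of_forall fun x => ?_
    rw [Real.norm_of_nonneg (by positivity), Real.norm_of_nonneg (by positivity)]
    exact mul_le_of_le_one_left (by positivity) (mm_sq_le μ a x)

lemma mm_int_le (f : H2) : ∫ x, mm μ a x ^ 2 * ‖f x‖ ^ 2 ≤ ‖f‖ ^ 2 := by
  rw [← H2_norm_sq]
  refine integral_mono (mm_int μ a f) (H2_int_sq f) fun x => ?_
  exact mul_le_of_le_one_left (by positivity) (mm_sq_le μ a x)

lemma nice (𝓕 : H2 ≃ₗᵢ[ℂ] H2) (h𝓕 : IsFourier 𝓕) (g : ℝ → ℂ) (hg : ContDiff ℝ 1 g)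
    (ε R : ℝ) (hε : 0 < ε) (hR : ε < R) (χ : H2)
    (hχ : χ =ᵐ[volume] (Set.Icc (-R) (-ε)).indicator g) :
    Tendsto (fun t : ℝ => ∫ x, mm μ a x ^ 2 * ‖(𝓕.symm (mulLp (ph t) χ)) x‖ ^ 2)
      atTop (nhds 0) := by
  obtain ⟨C, hC, hosc⟩ := osc g hg ε R hε hR
  set c : ℝ := ‖(Real.sqrt (2 * Real.pi) : ℂ)⁻¹‖
  have hc : 0 ≤ c := norm_nonneg _
  have hlim : Tendsto (fun t : ℝ => mm μ a (-(t * ε)) ^ 2 * ‖χ‖ ^ 2 + (c * C) ^ 2 / (t * ε))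
      atTop (nhds 0) := by
    have h1 := ((mm_tendsto μ a ε hε).pow 2).mul_const (‖χ‖ ^ 2)
    have h2 : Tendsto (fun t : ℝ => (c * C) ^ 2 / (t * ε)) atTop (nhds 0) :=
      tendsto_const_nhds.div_atTop (tendsto_id.atTop_mul_const hε)
    simpa using h1.add h2
  refine squeeze_zero' (Eventually.of_forall fun t => integral_nonneg fun x => by positivity) ?_ hlim
  filter_upwards [eventually_gt_atTop 0] with t ht
  have htε : 0 < t * ε := by positivity
  set f := mulLp (ph t) χ with hf
  have hfe : f =ᵐ[volume] (Set.Icc (-R) (-ε)).indicator (fun k => ph t k * g k) := by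
    filter_upwards [mul_coe t χ, hχ] with k h1 h2
    rw [hf, h1, h2]
    simp only [Set.indicator]; split_ifs <;> simp
  have hfi : Integrable f := by
    refine Integrable.congr ?_ hfe.symm
    rw [integrable_indicator_iff measurableSet_Icc]
    exact ((ph_cont t).mul hg.continuous).continuousOn.integrableOn_Icc
  have hsym := h𝓕.2 f hfi
  have hbound : ∀ᵐ x : ℝ, -(t * ε) < x → ‖(𝓕.symm f) x‖ ≤ c * C / (x + 2 * t * ε) := by
    filter_upwards [hsym] with x hx hxt
    rw [hx, norm_mul, mul_div_assoc]
    refine mul_le_mul_of_nonneg_left ?_ hc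
    refine le_trans (le_of_eq ?_) (hosc t x ht hxt.le)
    congr 1
    rw [intervalIntegral.integral_of_le (by linarith), ← integral_Icc_eq_integral_Ioc,
      ← integral_indicator measurableSet_Icc]
    refine integral_congr_ae ?_
    filter_upwards [hfe] with k hk
    rw [hk]
    simp only [Set.indicator]; split_ifs <;> simp
  obtain ⟨ti, te⟩ := int_tail (c * C) (2 * t * ε) (-(t * ε)) (by linarith)
  have te' : ∫ x in Set.Ioi (-(t * ε)), (c * C / (x + 2 * t * ε)) ^ 2 = (c * C) ^ 2 / (t * ε) := by
    rw [te]; congr 1; ring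
  have ti' := ti.integrable_indicator measurableSet_Ioi
  have hn : ‖χ‖ ^ 2 = ∫ x, ‖(𝓕.symm f) x‖ ^ 2 := by
    rw [H2_norm_sq, LinearIsometryEquiv.norm_map, hf, mul_norm]
  rw [← te', ← integral_indicator measurableSet_Ioi, hn, ← integral_const_mul,
    ← integral_add ((H2_int_sq _).const_mul _) ti']
  refine integral_mono_ae (mm_int μ a _) (((H2_int_sq _).const_mul _).add ti') ?_
  filter_upwards [hbound] with x hx
  by_cases h : -(t * ε) < x
  · rw [Set.indicator_of_mem (show x ∈ Set.Ioi (-(t * ε)) from h)]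
    have h1 : mm μ a x ^ 2 * ‖(𝓕.symm f) x‖ ^ 2 ≤ ‖(𝓕.symm f) x‖ ^ 2 :=
      mul_le_of_le_one_left (by positivity) (mm_sq_le μ a x)
    have h2 : ‖(𝓕.symm f) x‖ ^ 2 ≤ (c * C / (x + 2 * t * ε)) ^ 2 :=
      pow_le_pow_left₀ (norm_nonneg _) (hx h) 2
    have h3 : 0 ≤ mm μ a (-(t * ε)) ^ 2 * ‖(𝓕.symm f) x‖ ^ 2 := by positivity
    linarith
  · rw [Set.indicator_of_notMem (show x ∉ Set.Ioi (-(t * ε)) from h), add_zero]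
    refine mul_le_mul_of_nonneg_right ?_ (by positivity)
    exact pow_le_pow_left₀ (mm_nonneg μ a x) (mm_mono μ a (not_lt.1 h)) 2

end

theorem statement10 (μ : Measure ℝ) [IsProbabilityMeasure μ] (a : ℝ)
    (𝓕 : H2 ≃ₗᵢ[ℂ] H2) (h𝓕 : IsFourier 𝓕) (φ : H2)
    (hφ : ∀ᵐ k ∂(volume.restrict (Set.Ioi (0 : ℝ))), (𝓕 φ) k = 0) :
    Tendsto (fun t : ℝ => ∫ x : ℝ, (μ (Set.Ici (a - x))).toReal ^ 2 *
        ‖(𝓕.symm (mulLp (fun k : ℝ => Complex.exp (-(Complex.I * t * k ^ 2))) (𝓕 φ))) x‖ ^ 2)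
      atTop (nhds 0) := by
  change Tendsto (fun t : ℝ => ∫ x : ℝ, mm μ a x ^ 2 *
    ‖(𝓕.symm (mulLp (ph t) (𝓕 φ))) x‖ ^ 2) atTop (nhds 0)
  rw [Metric.tendsto_atTop']
  intro δ hδ
  obtain ⟨ε, R, g, χ, hε, hR, hg, hχ, hn⟩ := approx (𝓕 φ) hφ (δ / 8) (by positivity)
  obtain ⟨T, hT⟩ := (Metric.tendsto_atTop'.1 (nice μ a 𝓕 h𝓕 g hg ε R hε hR χ hχ)) (δ / 8)
    (by positivity)
  refine ⟨T, fun t ht => ?_⟩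
  have h1 := hT t ht
  have p1 : 0 ≤ ∫ x, mm μ a x ^ 2 * ‖(𝓕.symm (mulLp (ph t) χ)) x‖ ^ 2 :=
    integral_nonneg fun x => by positivity
  have p2 : 0 ≤ ∫ x, mm μ a x ^ 2 * ‖(𝓕.symm (mulLp (ph t) (𝓕 φ))) x‖ ^ 2 :=
    integral_nonneg fun x => by positivity
  rw [dist_zero_right, Real.norm_of_nonneg p1] at h1
  rw [dist_zero_right, Real.norm_of_nonneg p2]
  have h2 := mm_int_le μ a (𝓕.symm (mulLp (ph t) (𝓕 φ - χ)))
  rw [LinearIsometryEquiv.norm_map, mul_norm] at h2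
  have h3 : ∫ x, mm μ a x ^ 2 * ‖(𝓕.symm (mulLp (ph t) (𝓕 φ))) x‖ ^ 2 ≤
      ∫ x, (2 * (mm μ a x ^ 2 * ‖(𝓕.symm (mulLp (ph t) χ)) x‖ ^ 2) +
        2 * (mm μ a x ^ 2 * ‖(𝓕.symm (mulLp (ph t) (𝓕 φ - χ))) x‖ ^ 2)) := by
    refine integral_mono_ae (mm_int μ a _)
      (((mm_int μ a _).const_mul 2).add ((mm_int μ a _).const_mul 2)) ?_
    rw [mul_sub', map_sub]
    filter_upwards [Lp.coeFn_sub (𝓕.symm (mulLp (ph t) (𝓕 φ))) (𝓕.symm (mulLp (ph t) χ))] with x hx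
    rw [hx, Pi.sub_apply]
    set u := (𝓕.symm (mulLp (ph t) (𝓕 φ))) x
    set v := (𝓕.symm (mulLp (ph t) χ)) x
    have e : ‖u‖ ≤ ‖v‖ + ‖u - v‖ := by
      simpa using norm_add_le v (u - v)
    have e2 : ‖u‖ ^ 2 ≤ 2 * ‖v‖ ^ 2 + 2 * ‖u - v‖ ^ 2 := by
      nlinarith [norm_nonneg u, sq_nonneg (‖v‖ - ‖u - v‖), pow_le_pow_left₀ (norm_nonneg u) e 2]
    have := mul_le_mul_of_nonneg_left e2 (sq_nonneg (mm μ a x))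
    linarith
  rw [integral_add ((mm_int μ a _).const_mul 2) ((mm_int μ a _).const_mul 2),
    integral_const_mul, integral_const_mul] at h3
  linarith
end
end

section
/- Let x₀ < x₁ be real numbers. Let T, R_l, R_r : ℝ → ℂ satisfy T(−k) = conj(T(k)), R_l(−k) = conj(R_l(k)), R_r(−k) = conj(R_r(k)), and suppose that for every k ∈ ℝ the 2×2 matrix [[T(k), R_l(k)], [R_r(k), T(k)]] is unitary. Let φ₁, φ₂ : ℝ × ℝ → ℂ satisfy, for every k ∈ ℝ: φ₁(x,k) = R_l(k)e^{-ikx} + e^{ikx} for x ≤ x₀ and φ₁(x,k) = T(k)e^{ikx} for x ≥ x₁; φ₂(x,k) = T(k)e^{-ikx} for x ≤ x₀ and φ₂(x,k) = R_r(k)e^{ikx} + e^{-ikx} for x ≥ x₁. Let ψ₀ : ℝ → ℂ be a Schwartz function supported in (−∞, x₀], let t ∈ ℝ, and set (k,ψ₀)_i := (2π)^{-1/2} ∫_ℝ conj(φ_i(y,k)) ψ₀(y) dy and u(x) := (2π)^{-1/2} ∫_ℝ (1/2)[(k,ψ₀)_1 φ₁(x,k) + (k,ψ₀)_2 φ₂(x,k)]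 e^{-itk²} dk. Then for every x ≥ x₁, u(x) = (2π)^{-1/2} ∫_ℝ e^{ikx} T(k) (Fψ₀)(k) e^{-itk²} dk. -/
open Complex Filter Set MeasureTheory

noncomputable section

/-- Eigenfunction-expansion computation: for a Schwartz initial state `ψ₀`
supported in `(−∞, x₀]`, and scattering solutions `φ₁, φ₂` with transmission amplitude `T`
and reflection amplitudes `R_l, R_r` forming a unitary scattering matrix with the stated
conjugation symmetries, the evolved wave
`u(x) = (2π)^{-1/2} ∫ ½[(k,ψ₀)₁ φ₁(x,k) + (k,ψ₀)₂ φ₂(x,k)] e^{-itk²} dk`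
equals `(2π)^{-1/2} ∫ e^{ikx} T(k) (Fψ₀)(k) e^{-itk²} dk` for every `x ≥ x₁`. -/
theorem statement13 (x₀ x₁ : ℝ) (hx : x₀ < x₁)
    (T Rl Rr : ℝ → ℂ) (hTm : Measurable T) (hRlm : Measurable Rl) (hRrm : Measurable Rr)
    (hTsymm : ∀ k : ℝ, T (-k) = starRingEnd ℂ (T k))
    (hRlsymm : ∀ k : ℝ, Rl (-k) = starRingEnd ℂ (Rl k))
    (hRrsymm : ∀ k : ℝ, Rr (-k) = starRingEnd ℂ (Rr k))
    (hunit : ∀ k : ℝ,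
      Matrix.of ![![T k, Rl k], ![Rr k, T k]] ∈ Matrix.unitaryGroup (Fin 2) ℂ)
    (φ₁ φ₂ : ℝ → ℝ → ℂ)
    (hφ₁l : ∀ k : ℝ, ∀ x : ℝ, x ≤ x₀ →
      φ₁ x k = Rl k * Complex.exp (-(Complex.I * k * x)) + Complex.exp (Complex.I * k * x))
    (hφ₁r : ∀ k : ℝ, ∀ x : ℝ, x₁ ≤ x → φ₁ x k = T k * Complex.exp (Complex.I * k * x))
    (hφ₂l : ∀ k : ℝ, ∀ x : ℝ, x ≤ x₀ → φ₂ x k = T k * Complex.exp (-(Complex.I * k * x)))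
    (hφ₂r : ∀ k : ℝ, ∀ x : ℝ, x₁ ≤ x →
      φ₂ x k = Rr k * Complex.exp (Complex.I * k * x) + Complex.exp (-(Complex.I * k * x)))
    (ψ₀ : SchwartzMap ℝ ℂ) (hsupp : ∀ x : ℝ, x₀ < x → ψ₀ x = 0)
    (t : ℝ) (c₁ c₂ : ℝ → ℂ)
    (hc₁ : ∀ k : ℝ, c₁ k = (Real.sqrt (2 * Real.pi) : ℂ)⁻¹ *
      ∫ y : ℝ, starRingEnd ℂ (φ₁ y k) * ψ₀ y)
    (hc₂ : ∀ k : ℝ, c₂ k = (Real.sqrt (2 * Real.pi) : ℂ)⁻¹ *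
      ∫ y : ℝ, starRingEnd ℂ (φ₂ y k) * ψ₀ y)
    (u : ℝ → ℂ)
    (hu : ∀ x : ℝ, u x = (Real.sqrt (2 * Real.pi) : ℂ)⁻¹ *
      ∫ k : ℝ, (1 / 2 : ℂ) * (c₁ k * φ₁ x k + c₂ k * φ₂ x k) *
        Complex.exp (-(Complex.I * t * k ^ 2)))
    (x : ℝ) (hx1 : x₁ ≤ x) :
    u x = (Real.sqrt (2 * Real.pi) : ℂ)⁻¹ *
      ∫ k : ℝ, Complex.exp (Complex.I * k * x) * T k *
        ((Real.sqrt (2 * Real.pi) : ℂ)⁻¹ *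
          ∫ y : ℝ, Complex.exp (-(Complex.I * k * y)) * ψ₀ y) *
        Complex.exp (-(Complex.I * t * k ^ 2)) := by
  set s : ℂ := (Real.sqrt (2 * Real.pi) : ℂ)⁻¹ with hs
  set G : ℝ → ℂ := fun k => s * ∫ y : ℝ, Complex.exp (-(Complex.I * k * y)) * ψ₀ y with hG
  have hEint : ∀ k : ℝ, Integrable (fun y : ℝ => Complex.exp (-(Complex.I * k * y)) * ψ₀ y) := by
    intro k
    refine (ψ₀.integrable (μ := volume)).bdd_mul (c := 1)
      (by apply Continuous.aestronglyMeasurable; fun_prop) ?_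
    refine Filter.Eventually.of_forall fun y => ?_
    rw [Complex.norm_exp]
    simp
  have hGf : ∀ k : ℝ, G k = s * (FourierTransform.fourier ψ₀ : SchwartzMap ℝ ℂ) (k * (2 * Real.pi)⁻¹) := by
    intro k
    simp only [hG]
    congr 1
    rw [SchwartzMap.fourier_coe, Real.fourier_eq']
    refine integral_congr_ae (Filter.Eventually.of_forall fun y => ?_)
    simp only [smul_eq_mul]
    congr 2
    have : (Real.pi : ℂ) ≠ 0 := by exact_mod_cast Real.pi_ne_zero
    simp
    field_simp
  have hGint : Integrable G := by
    have h1 := ((FourierTransform.fourier ψ₀ : SchwartzMap ℝ ℂ).integrable (μ := volume)).comp_mul_right'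
      (R := (2 * Real.pi)⁻¹) (by positivity)
    have := h1.const_mul s
    exact this.congr (Filter.Eventually.of_forall fun k => (hGf k).symm)
  have hU : ∀ k, starRingEnd ℂ (Rl k) * T k + starRingEnd ℂ (T k) * Rr k = 0 := by
    intro k
    have h := congrFun (congrFun (Matrix.mem_unitaryGroup_iff'.1 (hunit k)) 1) 0
    simp [Matrix.mul_apply, Fin.sum_univ_two, Matrix.star_apply] at h
    linear_combination h
  have hTb : ∀ k, ‖T k‖ ≤ 1 := by
    intro k
    exact entry_norm_bound_of_unitary (hunit k) 0 0
  set h : ℝ → ℂ := fun k => Complex.exp (Complex.I * k * x) * T k * G k *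
    Complex.exp (-(Complex.I * t * k ^ 2)) with hh
  have hhint : Integrable h := by
    have : Integrable (fun k : ℝ => (Complex.exp (Complex.I * k * x) * T k *
        Complex.exp (-(Complex.I * t * k ^ 2))) * G k) := by
      refine hGint.bdd_mul (c := 1) (by apply Measurable.aestronglyMeasurable; fun_prop) ?_
      refine Filter.Eventually.of_forall fun y => ?_
      rw [norm_mul, norm_mul, Complex.norm_exp, Complex.norm_exp]
      have h2 : ((y : ℂ) ^ 2) = ((y ^ 2 : ℝ) : ℂ) := by push_cast; rfl
      have h3 : ((y : ℂ) ^ 2).im = 0 := by rw [h2]; exact Complex.ofReal_im _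
      simpa [h3] using hTb y
    refine this.congr (Filter.Eventually.of_forall fun k => ?_)
    simp only [hh]; ring
  have hconj : ∀ k y : ℝ, starRingEnd ℂ (Complex.exp (Complex.I * k * y)) =
      Complex.exp (-(Complex.I * k * y)) := by
    intro k y
    rw [← Complex.exp_conj]; simp
  have hconj2 : ∀ k y : ℝ, starRingEnd ℂ (Complex.exp (-(Complex.I * k * y))) =
      Complex.exp (-(Complex.I * (-k : ℝ) * y)) := by
    intro k y
    rw [← Complex.exp_conj]; simp
  have e1 : ∀ k, c₁ k = starRingEnd ℂ (Rl k) * G (-k) + G k := by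
    intro k
    have : (fun y : ℝ => starRingEnd ℂ (φ₁ y k) * ψ₀ y) = fun y : ℝ =>
        starRingEnd ℂ (Rl k) * (Complex.exp (-(Complex.I * (-k : ℝ) * y)) * ψ₀ y) +
          Complex.exp (-(Complex.I * k * y)) * ψ₀ y := by
      funext y
      rcases le_or_gt y x₀ with hy | hy
      · rw [hφ₁l k y hy, map_add, map_mul, hconj, hconj2]; ring
      · simp [hsupp y hy]
    rw [hc₁, this, integral_add ((hEint (-k)).const_mul _) (hEint k), integral_const_mul]
    simp only [hG]; ring
  have e2 : ∀ k, c₂ k = starRingEnd ℂ (T k) * G (-k) := by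
    intro k
    have : (fun y : ℝ => starRingEnd ℂ (φ₂ y k) * ψ₀ y) = fun y : ℝ =>
        starRingEnd ℂ (T k) * (Complex.exp (-(Complex.I * (-k : ℝ) * y)) * ψ₀ y) := by
      funext y
      rcases le_or_gt y x₀ with hy | hy
      · rw [hφ₂l k y hy, map_mul, hconj2]; ring
      · simp [hsupp y hy]
    rw [hc₂, this, integral_const_mul]
    simp only [hG]; ring
  rw [hu]
  congr 1
  have e3 : (fun k : ℝ => (1 / 2 : ℂ) * (c₁ k * φ₁ x k + c₂ k * φ₂ x k) *
        Complex.exp (-(Complex.I * t * k ^ 2))) = fun k => (1 / 2 : ℂ) * (h k + h (-k)) := by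
    funext k
    have e4 : h (-k) = Complex.exp (-(Complex.I * k * x)) * starRingEnd ℂ (T k) * G (-k) *
        Complex.exp (-(Complex.I * t * k ^ 2)) := by
      simp only [hh, hTsymm]
      congr 3
      · push_cast; ring_nf
      · push_cast; ring_nf
    rw [e4, e1, e2, hφ₁r k x hx1, hφ₂r k x hx1]
    simp only [hh]
    linear_combination (1 / 2 : ℂ) * G (-k) * Complex.exp (Complex.I * k * x) *
      Complex.exp (-(Complex.I * t * k ^ 2)) * hU k
  rw [e3, integral_const_mul, integral_add hhint hhint.comp_neg, integral_neg_eq_self h]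
  change _ = ∫ k, h k
  ring
end
end
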